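/- Let $p\equiv 1\pmod 4$ be prime, $n=(p-1)/2$, $\varepsilon$ the fundamental unit and $h$ the class number of $\mathbb{Q}(\sqrt p)$. Define $a$ by $a+b\sqrt p = \varepsilon^{h}$ if $p\equiv 1\pmod 8$ and $a+b\sqrt p = \varepsilon^{3h}$ if $p\equiv 5\pmod 8$ (with $a,b\in\tfrac12\mathbb{Z}$). Let $C$ be the $(n+1)\times(n+1)$ matrix with $C_{ij}=(\tfrac{j-i}{p})$, $0\le i,j\le n$. Then $\det C = -a$. -/

import Mathlib

namespace Evil
open Finset Matrix Polynomial

lemma lag_pow {m : ℕ} (x : Fin m → ℂ) (hx : Function.Injective x) (z : ℂ) (i : Fin m) :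
    z ^ (i : ℕ) = ∑ r, x r ^ (i : ℕ) * (Lagrange.basis univ x r).eval z := by
  have h := Lagrange.eq_interpolate (s := univ) (v := x) (f := (X : ℂ[X]) ^ (i : ℕ))
    hx.injOn (by rw [degree_X_pow]; simp)
  have h2 := congrArg (eval z) h
  rw [Lagrange.interpolate_apply, eval_finsetSum] at h2
  simpa using h2

noncomputable def cpoly {n : ℕ} (v : Fin n → ℂ) (j : Fin n) : ℂ[X] :=
  ∏ k ∈ univ.erase j, (1 - C (v k) * X)

lemma cpoly_deg {n : ℕ} (v : Fin n → ℂ) (j : Fin n) : (cpoly v j).natDegree < n := by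
  have h1 : (cpoly v j).natDegree ≤ ∑ k ∈ univ.erase j, 1 := by
    refine (natDegree_prod_le _ _).trans (sum_le_sum fun k _ => ?_)
    compute_degree
  have hj := j.2
  simp at h1
  omega

lemma cpoly_det {n : ℕ} (u v : Fin n → ℂ) :
    (Matrix.of fun i j => (cpoly v j).eval (u i)).det =
      (vandermonde u).det * (Matrix.of fun k j : Fin n => (cpoly v j).coeff k).det := by
  rw [← det_mul]
  congr 1
  ext i j
  simp only [of_apply, mul_apply, vandermonde_apply]
  rw [eval_eq_sum_range' (cpoly_deg v j), ← Fin.sum_univ_eq_sum_range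
    (fun k => (cpoly v j).coeff k * u i ^ k)]
  exact sum_congr rfl fun k _ => mul_comm _ _

lemma cpoly_coeff_det {n : ℕ} (v : Fin n → ℂ) (hv : Function.Injective v) (hv0 : ∀ i, v i ≠ 0) :
    (Matrix.of fun k j : Fin n => (cpoly v j).coeff k).det = (vandermonde v).det := by
  have h := cpoly_det (fun i => (v i)⁻¹) v
  have hd : (Matrix.of fun i j => (cpoly v j).eval ((v i)⁻¹)) =
      diagonal fun j => ∏ k ∈ {j}ᶜ, (1 - v k * (v j)⁻¹) := by
    ext i j
    by_cases hij : i = j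
    · subst hij
      rw [of_apply, diagonal_apply_eq, cpoly, eval_prod]
      refine prod_congr (by ext; simp) fun k _ => by simp
    · rw [of_apply, diagonal_apply_ne _ hij, cpoly, eval_prod]
      refine prod_eq_zero (i := i) (by simp [hij]) ?_
      simp [hv0 i]
  rw [hd, det_diagonal, ← prod_prod_Ioi_mul_eq_prod_prod_off_diag
    (fun k j => 1 - v k * (v j)⁻¹), det_vandermonde] at h
  rw [det_vandermonde]
  have hne : ∏ i : Fin n, ∏ j ∈ Ioi i, ((v j)⁻¹ - (v i)⁻¹) ≠ 0 := by
    refine prod_ne_zero_iff.2 fun i _ => prod_ne_zero_iff.2 fun j hj => ?_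
    rw [sub_ne_zero]
    intro he
    exact (mem_Ioi.1 hj).ne' (hv (inv_injective he))
  apply mul_left_cancel₀ hne
  rw [← h, ← prod_mul_distrib]
  refine prod_congr rfl fun i _ => ?_
  rw [← prod_mul_distrib]
  refine prod_congr rfl fun j _ => ?_
  have := hv0 i
  have := hv0 j
  field_simp

lemma cauchy_det {n : ℕ} (u v : Fin n → ℂ) (hv : Function.Injective v) (hv0 : ∀ i, v i ≠ 0)
    (h : ∀ i j, 1 - u i * v j ≠ 0) :
    (Matrix.of fun i j => (1 - u i * v j)⁻¹).det * ∏ i, ∏ j, (1 - u i * v j) =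
      (vandermonde u).det * (vandermonde v).det := by
  rw [← cpoly_coeff_det v hv hv0, ← cpoly_det, mul_comm, ← det_mul_column]
  congr 1
  ext i j
  simp only [of_apply, cpoly, eval_prod]
  rw [← mul_prod_erase univ _ (mem_univ j), mul_comm (1 - u i * v j), mul_assoc,
    mul_inv_cancel₀ (h i j), mul_one]
  exact prod_congr rfl fun k _ => by rw [eval_sub, eval_one, eval_mul, eval_C, eval_X, mul_comm]

noncomputable def bord {n : ℕ} (W : Matrix (Fin n) (Fin n) ℂ) (r : Fin (n+1) → ℂ) :
    Matrix (Fin (n+1)) (Fin (n+1)) ℂ :=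
  Matrix.of (Fin.cons r fun i => Fin.cons 1 (W i))

lemma bord_one {n : ℕ} (W : Matrix (Fin n) (Fin n) ℂ) (c : ℂ) :
    (bord W (Fin.cons 1 fun _ => -c)).det = (W + Matrix.of fun _ _ => c).det := by
  have h1 : (bord W (Fin.cons 1 fun _ => -c)).det =
      (bord (W + Matrix.of fun _ _ => c) (Fin.cons 1 fun _ => 0)).det := by
    rw [← det_transpose, ← det_transpose (bord (W + _) _)]
    refine det_eq_of_forall_row_eq_smul_add_const (Fin.cons 0 fun _ => -c) 0 (by simp) ?_
    intro i j
    refine Fin.cases ?_ (fun i => ?_) i <;> refine Fin.cases ?_ (fun j => ?_) j <;>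
      simp [bord, Matrix.add_apply]
  rw [h1, det_succ_row_zero, Fin.sum_univ_succ]
  simp [bord]
  congr 1

lemma bord_row {n : ℕ} (W : Matrix (Fin n) (Fin n) ℂ) (r s : Fin (n+1) → ℂ) (c : ℂ) :
    (bord W (r + c • s)).det = (bord W r).det + c * (bord W s).det := by
  have e : ∀ r, bord W r = updateRow (bord W 0) 0 r := by
    intro r
    ext i j
    refine Fin.cases ?_ (fun i => ?_) i <;> simp [bord, updateRow_apply]
  rw [e (r + c • s), e r, e s, det_updateRow_add, det_updateRow_smul]

lemma bord_det {n : ℕ} (W : Matrix (Fin n) (Fin n) ℂ) :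
    2 * (bord W (Fin.cons 0 fun _ => -1)).det =
      (W + Matrix.of fun _ _ => 1).det - (W + Matrix.of fun _ _ => -1).det := by
  have h : ∀ c : ℂ, (W + Matrix.of fun _ _ => c).det = (bord W (Fin.cons 1 fun _ => 0)).det +
      c * (bord W (Fin.cons 0 fun _ => -1)).det := by
    intro c
    rw [← bord_one, ← bord_row]
    congr 2
    ext i
    refine Fin.cases ?_ (fun i => ?_) i <;> simp
  rw [h 1, h (-1)]
  ring

/-- the bordered matrix for our `w`. -/
lemma bord_w {n : ℕ} (hn : Even n) (u v : Fin n → ℂ) (hv : Function.Injective v)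
    (hv0 : ∀ i, v i ≠ 0) (h : ∀ i j, 1 - u i * v j ≠ 0) :
    2 * (bord (Matrix.of fun i j => (v j - u i) / (1 - u i * v j))
        (Fin.cons 0 fun _ => -1)).det * ∏ i, ∏ j, (1 - u i * v j) =
      (vandermonde u).det * (vandermonde v).det *
       ((∏ i, (1 - u i)) * (∏ j, (1 + v j)) - (∏ i, (1 + u i)) * ∏ j, (1 - v j)) := by
  rw [bord_det, ← cauchy_det u v hv hv0 h]
  have h1 : ((Matrix.of fun i j => (v j - u i) / (1 - u i * v j)) + Matrix.of fun _ _ => 1).det =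
      (∏ i, (1 - u i)) * ((∏ j, (1 + v j)) * (Matrix.of fun i j => (1 - u i * v j)⁻¹).det) := by
    rw [← det_mul_row, ← det_mul_column]
    congr 1
    ext i j
    simp only [Matrix.add_apply, of_apply]
    have := mul_inv_cancel₀ (h i j)
    linear_combination -this
  have h2 : ((Matrix.of fun i j => (v j - u i) / (1 - u i * v j)) + Matrix.of fun _ _ => -1).det =
      (∏ i, (1 + u i)) * ((∏ j, (1 - v j)) * (Matrix.of fun i j => (1 - u i * v j)⁻¹).det) := by
    have e : ∏ i, (1 + u i) = ∏ i, (-(1 + u i)) := by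
      rw [prod_neg]; simp [hn.neg_one_pow]
    rw [e, ← det_mul_row, ← det_mul_column]
    congr 1
    ext i j
    simp only [Matrix.add_apply, of_apply]
    have := mul_inv_cancel₀ (h i j)
    linear_combination this
  rw [h1, h2]
  ring

end Evil


namespace Evil
open Finset Matrix Polynomial

structure Enm (p m : ℕ) [Fact p.Prime] (c d : Fin (2*m) → ZMod p) : Prop where
  hp : p = 4 * m + 1
  bij : Function.Bijective (Sum.elim (fun _ : Unit => (0 : ZMod p)) (Sum.elim c d))
  hc : ∀ i, quadraticChar (ZMod p) (c i) = 1
  hd : ∀ i, quadraticChar (ZMod p) (d i) = -1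

section
variable {p m : ℕ} [Fact p.Prime] {c d : Fin (2*m) → ZMod p}

lemma exists_enm (hp : p = 4 * m + 1) : ∃ c d : Fin (2*m) → ZMod p, Enm p m c d := by
  have hF : ringChar (ZMod p) ≠ 2 := by rw [ZMod.ringChar_zmod_n]; omega
  set Q : Finset (ZMod p) := univ.filter fun t => quadraticChar (ZMod p) t = 1 with hQ
  set N : Finset (ZMod p) := univ.filter fun t => quadraticChar (ZMod p) t = -1 with hN
  have hQN : Disjoint Q N := by
    rw [disjoint_filter]; intro x _ h1 h2; rw [h1] at h2; norm_num at h2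
  have h0 : (0 : ZMod p) ∉ Q ∪ N := by simp [hQ, hN]
  have hun : insert 0 (Q ∪ N) = univ := by
    ext t
    simp only [mem_insert, mem_union, mem_univ, iff_true, hQ, hN, mem_filter, true_and]
    by_cases h : t = 0
    · exact Or.inl h
    · exact Or.inr (quadraticChar_dichotomy h)
  have hcard : 1 + (Q.card + N.card) = p := by
    rw [← card_union_of_disjoint hQN, add_comm, ← card_insert_of_notMem h0, hun, card_univ,
      ZMod.card]
  have hsum : (Q.card : ℤ) - N.card = 0 := by
    have := quadraticChar_sum_zero hF
    rw [← hun, sum_insert h0, sum_union hQN, quadraticChar_zero, zero_add,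
      sum_congr rfl (g := fun _ => (1 : ℤ)) (fun x hx => (mem_filter.1 hx).2),
      sum_congr (s₁ := N) rfl (g := fun _ => (-1 : ℤ)) (fun x hx => (mem_filter.1 hx).2)] at this
    rw [sum_const, sum_const] at this
    simp only [nsmul_eq_mul, mul_one, mul_neg] at this
    linarith
  have hQc : Q.card = 2 * m := by omega
  have hNc : N.card = 2 * m := by omega
  let eQ := Q.equivFinOfCardEq hQc
  let eN := N.equivFinOfCardEq hNc
  have hcq : ∀ i, quadraticChar (ZMod p) (eQ.symm i : ZMod p) = 1 := fun i =>
    (mem_filter.1 (eQ.symm i).2).2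
  have hdq : ∀ i, quadraticChar (ZMod p) (eN.symm i : ZMod p) = -1 := fun i =>
    (mem_filter.1 (eN.symm i).2).2
  refine ⟨fun i => eQ.symm i, fun i => eN.symm i, hp, ?_, hcq, hdq⟩
  constructor
  · rintro (a | a | a) (b | b | b) h
    · rfl
    · simp only [Sum.elim_inl, Sum.elim_inr] at h
      have := hcq b; rw [← h] at this; simp at this
    · simp only [Sum.elim_inl, Sum.elim_inr] at h
      have := hdq b; rw [← h] at this; simp at this
    · simp only [Sum.elim_inl, Sum.elim_inr] at h
      have := hcq a; rw [h] at this; simp at this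
    · simp only [Sum.elim_inl, Sum.elim_inr] at h
      rw [eQ.symm.injective (Subtype.ext h)]
    · simp only [Sum.elim_inl, Sum.elim_inr] at h
      have h1 := hcq a; have h2 := hdq b; rw [h] at h1; rw [h1] at h2; norm_num at h2
    · simp only [Sum.elim_inl, Sum.elim_inr] at h
      have := hdq a; rw [h] at this; simp at this
    · simp only [Sum.elim_inl, Sum.elim_inr] at h
      have h1 := hcq b; have h2 := hdq a; rw [h] at h2; rw [h1] at h2; norm_num at h2
    · simp only [Sum.elim_inl, Sum.elim_inr] at h
      rw [eN.symm.injective (Subtype.ext h)]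
  · intro t
    have ht : t ∈ insert 0 (Q ∪ N) := by rw [hun]; exact mem_univ t
    rw [mem_insert, mem_union] at ht
    rcases ht with h | h | h
    · exact ⟨Sum.inl (), h.symm⟩
    · exact ⟨Sum.inr (Sum.inl (eQ ⟨t, h⟩)), by simp⟩
    · exact ⟨Sum.inr (Sum.inr (eN ⟨t, h⟩)), by simp⟩

namespace Enm

lemma c_inj (E : Enm p m c d) : Function.Injective c := fun i j h => by
  have := E.bij.1 (a₁ := Sum.inr (Sum.inl i)) (a₂ := Sum.inr (Sum.inl j)) h
  simpa using this

lemma d_inj (E : Enm p m c d) : Function.Injective d := fun i j h => by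
  have := E.bij.1 (a₁ := Sum.inr (Sum.inr i)) (a₂ := Sum.inr (Sum.inr j)) h
  simpa using this

lemma c_ne (E : Enm p m c d) (i) : c i ≠ 0 := fun h => by
  have := E.hc i; rw [h] at this; simp at this

lemma d_ne (E : Enm p m c d) (i) : d i ≠ 0 := fun h => by
  have := E.hd i; rw [h] at this; simp at this

lemma exc (E : Enm p m c d) {t : ZMod p} (ht : quadraticChar (ZMod p) t = 1) : ∃ i, c i = t := by
  obtain ⟨(a | a | a), h⟩ := E.bij.2 t
  · simp at h; rw [← h] at ht; simp at ht
  · exact ⟨a, h⟩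
  · simp at h; have := E.hd a; rw [h, ht] at this; norm_num at this

lemma exd (E : Enm p m c d) {t : ZMod p} (ht : quadraticChar (ZMod p) t = -1) :
    ∃ i, d i = t := by
  obtain ⟨(a | a | a), h⟩ := E.bij.2 t
  · simp at h; rw [← h] at ht; simp at ht
  · simp at h; have := E.hc a; rw [h, ht] at this; norm_num at this
  · exact ⟨a, h⟩

lemma prod_all {M : Type*} [CommMonoid M] (E : Enm p m c d) (f : ZMod p → M) :
    ∏ t, f t = f 0 * ((∏ i, f (c i)) * ∏ i, f (d i)) := by
  rw [← E.bij.prod_comp]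
  simp [Fintype.prod_sum_type]

lemma sum_all {M : Type*} [AddCommMonoid M] (E : Enm p m c d) (f : ZMod p → M) :
    ∑ t, f t = f 0 + ((∑ i, f (c i)) + ∑ i, f (d i)) := by
  rw [← E.bij.sum_comp]
  simp [Fintype.sum_sum_type]

lemma perm_aux {k : ℕ} {a b : Fin k → ZMod p} (ha : Function.Injective a)
    (h : ∀ i, ∃ j, b j = a i) : ∃ σ : Equiv.Perm (Fin k), ∀ i, a i = b (σ i) := by
  choose f hf using h
  have hinj : Function.Injective f := fun i j hij => ha (by rw [← hf i, ← hf j, hij])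
  exact ⟨Equiv.ofBijective f (Finite.injective_iff_bijective.1 hinj), fun i => (hf i).symm⟩

lemma mul_inj {k : ℕ} {a : Fin k → ZMod p} (ha : Function.Injective a) {t : ZMod p} (ht : t ≠ 0) :
    Function.Injective fun i => t * a i := fun _ _ h => ha (mul_left_cancel₀ ht h)

lemma ne_of {t : ZMod p} {e : ℤ} (he : e ≠ 0) (ht : quadraticChar (ZMod p) t = e) : t ≠ 0 := by
  rintro rfl; simp at ht; exact he ht.symm

lemma perm_cc (E : Enm p m c d) {t : ZMod p} (ht : quadraticChar (ZMod p) t = 1) :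
    ∃ σ : Equiv.Perm (Fin (2*m)), ∀ i, t * c i = c (σ i) :=
  perm_aux (mul_inj E.c_inj (ne_of (by norm_num) ht)) fun i =>
    E.exc (by rw [map_mul, ht, E.hc i]; norm_num)

lemma perm_dd (E : Enm p m c d) {t : ZMod p} (ht : quadraticChar (ZMod p) t = 1) :
    ∃ σ : Equiv.Perm (Fin (2*m)), ∀ i, t * d i = d (σ i) :=
  perm_aux (mul_inj E.d_inj (ne_of (by norm_num) ht)) fun i =>
    E.exd (by rw [map_mul, ht, E.hd i]; norm_num)

lemma perm_cd (E : Enm p m c d) {t : ZMod p} (ht : quadraticChar (ZMod p) t = -1) :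
    ∃ σ : Equiv.Perm (Fin (2*m)), ∀ i, t * c i = d (σ i) :=
  perm_aux (mul_inj E.c_inj (ne_of (by norm_num) ht)) fun i =>
    E.exd (by rw [map_mul, ht, E.hc i]; norm_num)

lemma perm_dc (E : Enm p m c d) {t : ZMod p} (ht : quadraticChar (ZMod p) t = -1) :
    ∃ σ : Equiv.Perm (Fin (2*m)), ∀ i, t * d i = c (σ i) :=
  perm_aux (mul_inj E.d_inj (ne_of (by norm_num) ht)) fun i =>
    E.exc (by rw [map_mul, ht, E.hd i]; norm_num)

lemma chi_neg (E : Enm p m c d) : quadraticChar (ZMod p) (-1) = 1 := by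
  have hF : ringChar (ZMod p) ≠ 2 := by rw [ZMod.ringChar_zmod_n]; have := E.hp; omega
  rw [quadraticChar_neg_one hF, ZMod.card, ZMod.χ₄_nat_eq_if_mod_four]
  have := E.hp
  rw [if_neg (by omega), if_pos (by omega)]

lemma neg_c (E : Enm p m c d) : ∃ σ : Equiv.Perm (Fin (2*m)), ∀ i, - c i = c (σ i) := by
  simpa using E.perm_cc E.chi_neg

lemma neg_d (E : Enm p m c d) : ∃ σ : Equiv.Perm (Fin (2*m)), ∀ i, - d i = d (σ i) := by
  simpa using E.perm_dd E.chi_neg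

lemma two_ne (E : Enm p m c d) : (2 : ZMod p) ≠ 0 := by
  have h : ((2 : ℕ) : ZMod p) ≠ 0 := by
    rw [Ne, ZMod.natCast_eq_zero_iff]
    intro h
    have h2 := Nat.le_of_dvd (by norm_num) h
    have := E.hp
    have := (Fact.out : p.Prime).two_le
    omega
  simpa using h

lemma sum_c (E : Enm p m c d) : ∑ i, c i = 0 := by
  obtain ⟨σ, hσ⟩ := E.neg_c
  have h : ∑ i, c i = - ∑ i, c i := by
    rw [← sum_neg_distrib]; simp_rw [hσ]; rw [Equiv.sum_comp σ c]
  have h2 : 2 * ∑ i, c i = 0 := by linear_combination h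
  exact (mul_eq_zero.1 h2).resolve_left E.two_ne

lemma sum_d (E : Enm p m c d) : ∑ i, d i = 0 := by
  obtain ⟨σ, hσ⟩ := E.neg_d
  have h : ∑ i, d i = - ∑ i, d i := by
    rw [← sum_neg_distrib]; simp_rw [hσ]; rw [Equiv.sum_comp σ d]
  have h2 : 2 * ∑ i, d i = 0 := by linear_combination h
  exact (mul_eq_zero.1 h2).resolve_left E.two_ne

lemma diff_inv {M : Type*} [CommMonoid M] (E : Enm p m c d) (f : ZMod p → M) {t : ZMod p}
    (ht : t ≠ 0) : ∏ i, ∏ j, f (t * (d j - c i)) = ∏ i, ∏ j, f (d j - c i) := by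
  rcases quadraticChar_dichotomy ht with h | h
  · obtain ⟨σ, hσ⟩ := E.perm_cc h
    obtain ⟨τ, hτ⟩ := E.perm_dd h
    simp_rw [mul_sub, hσ, hτ]
    rw [Equiv.prod_comp σ (fun i => ∏ j, f (d (τ j) - c i))]
    exact prod_congr rfl fun i _ => Equiv.prod_comp τ (fun j => f (d j - c i))
  · obtain ⟨σ, hσ⟩ := E.perm_cd h
    obtain ⟨τ, hτ⟩ := E.perm_dc h
    obtain ⟨σ', hσ'⟩ := E.neg_c
    obtain ⟨τ', hτ'⟩ := E.neg_d
    simp_rw [mul_sub, hσ, hτ]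
    rw [Equiv.prod_comp σ (fun i => ∏ j, f (c (τ j) - d i))]
    simp_rw [fun i => Equiv.prod_comp τ (fun j => f (c j - d i))]
    rw [prod_comm]
    have : ∀ i j, c i - d j = d (τ' j) - c (σ' i) := fun i j => by
      rw [← hσ', ← hτ']; ring
    simp_rw [this]
    rw [Equiv.prod_comp σ' (fun i => ∏ j, f (d (τ' j) - c i))]
    exact prod_congr rfl fun i _ => Equiv.prod_comp τ' (fun j => f (d j - c i))

lemma cd_ne (E : Enm p m c d) (i j) : d j - c i ≠ 0 := by
  intro h
  have h1 := E.hc i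
  rw [← sub_eq_zero.1 h, E.hd j] at h1
  norm_num at h1

lemma count (E : Enm p m c d) {t : ZMod p} (ht : t ≠ 0) :
    ∑ i, ∑ j, (if d j - c i = t then 1 else 0) = m := by
  set f : ZMod p → ℕ := fun s => if s = t then 1 else 0 with hf
  have hm : 0 < m := by
    have := (Fact.out : p.Prime).two_le
    have := E.hp
    omega
  have hA : ∀ a ∈ univ.erase (0 : ZMod p), ∑ i, ∑ j, f (a * (d j - c i)) =
      ∑ i, ∑ j, f (d j - c i) := fun a ha => by
    have := E.diff_inv (fun s => Multiplicative.ofAdd (f s)) (ne_of_mem_erase ha)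
    simpa [← ofAdd_sum] using this
  have h1 := sum_congr (s₁ := univ.erase (0 : ZMod p)) rfl hA
  rw [sum_const, card_erase_of_mem (mem_univ _), card_univ, ZMod.card, sum_comm] at h1
  have h2 : ∀ i j, ∑ a ∈ univ.erase (0 : ZMod p), f (a * (d j - c i)) = 1 := by
    intro i j
    have hne := E.cd_ne i j
    rw [sum_eq_single (t * (d j - c i)⁻¹)]
    · simp [hf, hne]
    · intro b _ hb
      simp only [hf]
      rw [if_neg]
      rintro rfl
      exact hb (by field_simp)
    · intro h
      exact absurd (mem_erase.2 ⟨mul_ne_zero ht (inv_ne_zero hne), mem_univ _⟩) h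
  simp_rw [fun i => sum_comm (s := univ.erase (0 : ZMod p)) (t := univ)
    (f := fun a j => f (a * (d j - c i))), h2] at h1
  simp only [sum_const, card_univ, Fintype.card_fin, smul_eq_mul, mul_one] at h1
  have hp := E.hp
  have h3 : p - 1 = 4 * m := by omega
  rw [h3] at h1
  have : (4 * m) * m = (4 * m) * ∑ i, ∑ j, f (d j - c i) := by rw [← h1]; ring
  exact (Nat.eq_of_mul_eq_mul_left (by omega) this).symm

lemma diff_prod (E : Enm p m c d) (f : ZMod p → ℂ) :
    ∏ i, ∏ j, f (d j - c i) = ((∏ i, f (c i)) * ∏ i, f (d i)) ^ m := by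
  have h1 : ∀ s : ZMod p, s ≠ 0 → f s = ∏ t ∈ univ.erase (0 : ZMod p),
      f t ^ (if s = t then 1 else 0) := by
    intro s hs
    rw [prod_eq_single s]
    · simp
    · intro b _ hb; simp [hb.symm]
    · intro h; exact absurd (mem_erase.2 ⟨hs, mem_univ _⟩) h
  have h2 : ∏ i, ∏ j, f (d j - c i) = ∏ i, ∏ j, ∏ t ∈ univ.erase (0 : ZMod p),
      f t ^ (if d j - c i = t then 1 else 0) :=
    prod_congr rfl fun i _ => prod_congr rfl fun j _ => h1 _ (E.cd_ne i j)
  rw [h2]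
  simp_rw [fun i => prod_comm (s := univ) (t := univ.erase (0 : ZMod p))
    (f := fun j t => f t ^ (if d j - c i = t then 1 else 0))]
  rw [prod_comm]
  simp_rw [prod_pow_eq_pow_sum]
  rw [prod_congr rfl (g := fun t => f t ^ m) fun t ht => by rw [E.count (ne_of_mem_erase ht)],
    prod_pow]
  congr 1
  have := E.prod_all (fun t => if t = 0 then 1 else f t)
  simp only [if_true, one_mul, E.c_ne, E.d_ne, if_false] at this
  rw [← this, ← mul_prod_erase univ _ (mem_univ (0 : ZMod p))]
  simp only [if_true, one_mul]
  exact prod_congr rfl fun t ht => by rw [if_neg (ne_of_mem_erase ht)]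

end Enm
end
end Evil


set_option linter.all false
namespace Evil
open Finset Matrix Polynomial

section
variable {p m : ℕ} [Fact p.Prime] {c d : Fin (2*m) → ZMod p} {ψ : AddChar (ZMod p) ℂ}

noncomputable def Gs (ψ : AddChar (ZMod p) ℂ) : ℂ :=
  ∑ t, ((quadraticChar (ZMod p) t : ℤ) : ℂ) * ψ t

lemma psi_sum {ι : Type*} (s : Finset ι) (a : ι → ZMod p) : ψ (∑ i ∈ s, a i) = ∏ i ∈ s, ψ (a i) := by
  classical
  induction s using Finset.induction_on with
  | empty => simp
  | insert i s hi ih => rw [sum_insert hi, prod_insert hi, AddChar.map_add_eq_mul, ih]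

lemma Gs_shift (E : Enm p m c d) (a : ZMod p) :
    ∑ t, ((quadraticChar (ZMod p) t : ℤ) : ℂ) * ψ (a * t) =
      ((quadraticChar (ZMod p) a : ℤ) : ℂ) * Gs ψ := by
  have hF : ringChar (ZMod p) ≠ 2 := by
    rw [ZMod.ringChar_zmod_n]; have := E.hp; omega
  by_cases ha : a = 0
  · subst ha
    have := quadraticChar_sum_zero hF
    simp only [zero_mul, AddChar.map_zero_eq_one, mul_one, quadraticChar_zero, Int.cast_zero]
    exact_mod_cast this
  · rw [Gs, mul_sum]
    refine Fintype.sum_bijective (fun t => a * t) (mulLeft_bijective₀ a ha) _ _ fun t => ?_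
    have h2 := quadraticChar_sq_one' ha
    have h3 : ((quadraticChar (ZMod p) a : ℤ) : ℂ) * ((quadraticChar (ZMod p) a : ℤ) : ℂ) = 1 := by
      rcases quadraticChar_dichotomy ha with h | h <;> rw [h] <;> norm_num
    rw [map_mul (quadraticChar (ZMod p))]; push_cast
    linear_combination (-((quadraticChar (ZMod p) t : ℤ) : ℂ) * ψ (a * t)) * h3

lemma psi_prim (E : Enm p m c d) (hψ : Function.Injective ψ) : IsPrimitiveRoot (ψ 1) p := by
  have : ∀ k : ℕ, ψ 1 ^ k = ψ k := fun k => by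
    rw [← AddChar.map_nsmul_eq_pow]; simp
  constructor
  · rw [this]; simp
  · intro k hk
    rw [this, ← AddChar.map_zero_eq_one ψ] at hk
    exact (ZMod.natCast_eq_zero_iff _ _).1 (hψ hk)

lemma Gs_sq (E : Enm p m c d) (hψ : Function.Injective ψ) : Gs ψ ^ 2 = p := by
  have hF : ringChar (ZMod p) ≠ 2 := by
    rw [ZMod.ringChar_zmod_n]; have := E.hp; omega
  have hprim : ψ.IsPrimitive := AddChar.IsPrimitive.of_ne_one (by
    rintro rfl
    have := @hψ 0 1 (by simp)
    exact zero_ne_one this)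
  have h := gaussSum_sq (χ := (quadraticChar (ZMod p)).ringHomComp (Int.castRingHom ℂ))
    (ψ := ψ) (by
      rw [MulChar.ringHomComp_ne_one_iff Int.cast_injective]
      exact quadraticChar_ne_one hF) ((quadraticChar_isQuadratic _).comp _) hprim
  rw [ZMod.card, MulChar.ringHomComp_apply, E.chi_neg] at h
  rw [show Gs ψ = gaussSum ((quadraticChar (ZMod p)).ringHomComp (Int.castRingHom ℂ)) ψ from rfl, h]
  simp

lemma nod_all (E : Enm p m c d) (hψ : Function.Injective ψ) :
    (X - C 1) * (Lagrange.nodal univ (fun i => ψ (c i)) * Lagrange.nodal univ (fun i => ψ (d i)))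
      = (X ^ p - 1 : ℂ[X]) := by
  have hp := (Fact.out : p.Prime).pos
  have hpr := psi_prim E hψ
  rw [X_pow_sub_one_eq_prod hp hpr]
  have : nthRootsFinset p (1 : ℂ) = univ.image ψ := by
    symm
    apply eq_of_subset_of_card_le
    · intro z hz
      obtain ⟨t, -, rfl⟩ := mem_image.1 hz
      rw [mem_nthRootsFinset hp, ← AddChar.map_nsmul_eq_pow]
      simp
    · rw [card_image_of_injective _ hψ, hpr.card_nthRootsFinset, card_univ, ZMod.card]
  rw [this, prod_image (fun a _ b _ h => hψ h), E.prod_all, AddChar.map_zero_eq_one]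
  rfl

lemma eval_deriv {P Q : ℂ[X]} (h : P * Q = X ^ p - 1) {z : ℂ} (hz : P.eval z = 0) :
    (derivative P).eval z * Q.eval z * z = p := by
  have hp := (Fact.out : p.Prime).pos
  have h1 := congrArg (fun R => (derivative R).eval z) h
  have h2 := congrArg (fun R => R.eval z) h
  simp [hz] at h1 h2
  rw [derivative_X_pow] at h1
  simp at h1
  rw [h1, mul_assoc, ← pow_succ, Nat.sub_add_cancel hp]
  rw [sub_eq_zero.1 h2.symm, mul_one]

lemma nodal_cons {n : ℕ} (x : Fin n → ℂ) (a : ℂ) :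
    Lagrange.nodal univ (Fin.cons a x : Fin (n+1) → ℂ) =
      (X - C a) * Lagrange.nodal univ x := by
  simp [Lagrange.nodal, Fin.prod_univ_succ]

lemma wt {n : ℕ} {x y : Fin n → ℂ}
    (h : (X - C 1) * (Lagrange.nodal univ x * Lagrange.nodal univ y) = (X ^ p - 1 : ℂ[X]))
    (k : Fin (n+1)) :
    Lagrange.nodalWeight univ (Fin.cons 1 x : Fin (n+1) → ℂ) k =
     (Fin.cons 1 x : Fin (n+1) → ℂ) k * (∏ j, ((Fin.cons 1 x : Fin (n+1) → ℂ) k - y j)) / p := by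
  have hp : (p : ℂ) ≠ 0 := Nat.cast_ne_zero.2 (Fact.out : p.Prime).ne_zero
  rw [← mul_assoc, ← nodal_cons] at h
  have := eval_deriv h (Lagrange.eval_nodal_at_node (s := univ) (mem_univ k))
  rw [Lagrange.nodalWeight_eq_eval_derivative_nodal (mem_univ k)]
  rw [Lagrange.eval_nodal (v := y)] at this
  rw [eq_div_iff hp, ← this]
  have h0 : eval ((Fin.cons 1 x : Fin (n+1) → ℂ) k)
    (derivative (Lagrange.nodal univ (Fin.cons 1 x : Fin (n+1) → ℂ))) ≠ 0 := by
    intro h0; rw [h0] at this; simp at this; exact hp this.symm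
  field_simp

lemma FH (E : Enm p m c d) (hψ : Function.Injective ψ) :
    (∏ i, (1 - ψ (c i))) * ∏ i, (1 - ψ (d i)) = p := by
  have := eval_deriv (p := p) (z := 1) (nod_all E hψ) (by simp)
  simpa [Lagrange.eval_nodal] using this

lemma half_eq (E : Enm p m c d) (t : ZMod p) : (2 : ZMod p)⁻¹ * t = (2 * m : ℕ) • (-t) := by
  have h2 := E.two_ne
  have hp : ((4 * m + 1 : ℕ) : ZMod p) = 0 := by rw [← E.hp]; simp
  push_cast at hp
  rw [inv_mul_eq_iff_eq_mul₀ h2, nsmul_eq_mul]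
  push_cast
  linear_combination t * hp

lemma refl_aux (E : Enm p m c d) {a : Fin (2*m) → ZMod p}
    (hσ : ∃ σ : Equiv.Perm (Fin (2*m)), ∀ i, - a i = a (σ i)) (hs : ∑ i, a i = 0) (t : ZMod p) :
    ∏ i, (ψ (-t) - ψ (a i)) = ψ (2⁻¹ * t) * ∏ i, (ψ t - ψ (a i)) := by
  obtain ⟨σ, hσ⟩ := hσ
  rw [← Equiv.prod_comp σ]
  simp_rw [← hσ]
  have : ∀ i, ψ (-t) - ψ (-a i) = ψ (-t) * ψ (-a i) * (-1) * (ψ t - ψ (a i)) := fun i => by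
    have h1 : ψ (-t) * ψ t = 1 := by rw [← AddChar.map_add_eq_mul]; simp
    have h2 : ψ (-a i) * ψ (a i) = 1 := by rw [← AddChar.map_add_eq_mul]; simp
    linear_combination ψ (-a i) * h1 - ψ (-t) * h2
  simp_rw [this, prod_mul_distrib]
  rw [half_eq E, AddChar.map_nsmul_eq_pow]
  have h3 : ∏ i, ψ (-a i) = 1 := by
    rw [← psi_sum]; simp [hs]
  rw [h3]
  simp

lemma psi_half (E : Enm p m c d) (t : ZMod p) : ψ (2⁻¹ * t) ^ 2 = ψ t := by
  rw [← AddChar.map_nsmul_eq_pow]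
  congr 1
  have := E.two_ne
  simp; field_simp

lemma R_eq (E : Enm p m c d) (hψ : Function.Injective ψ) :
    ∏ i, ∏ j, (1 - ψ (d j - c i)) = (p : ℂ) ^ m := by
  rw [E.diff_prod (fun t => 1 - ψ t), FH E hψ]

lemma prod_psi_c (E : Enm p m c d) : ∏ i, ψ (c i) = 1 := by
  rw [← psi_sum, E.sum_c]; simp

lemma prod_psi_d (E : Enm p m c d) : ∏ i, ψ (d i) = 1 := by
  rw [← psi_sum, E.sum_d]; simp

lemma R1 (E : Enm p m c d) (hψ : Function.Injective ψ) :
    ∏ i, ∏ j, (ψ (c i) - ψ (d j)) = (p : ℂ) ^ m := by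
  rw [← R_eq E hψ]
  have : ∀ i j, ψ (c i) - ψ (d j) = ψ (c i) * (1 - ψ (d j - c i)) := fun i j => by
    rw [mul_sub, ← AddChar.map_add_eq_mul]; simp
  simp_rw [this, prod_mul_distrib]
  simp [prod_pow, prod_psi_c E]

lemma R2 (E : Enm p m c d) (hψ : Function.Injective ψ) :
    ∏ j, ∏ i, (ψ (d j) - ψ (c i)) = (p : ℂ) ^ m := by
  rw [← R1 E hψ, prod_comm]
  refine prod_congr rfl fun i _ => ?_
  have : ∀ j, ψ (d j) - ψ (c i) = (-1) * (ψ (c i) - ψ (d j)) := fun j => by ring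
  simp_rw [this, prod_mul_distrib]
  simp

lemma R3 (E : Enm p m c d) (hψ : Function.Injective ψ) :
    ∏ i, ∏ j, (1 - ψ (2⁻¹ * c i) * ψ (2⁻¹ * d j)) = (p : ℂ) ^ m := by
  obtain ⟨σ, hσ⟩ := E.neg_c
  rw [← Equiv.prod_comp σ]
  simp_rw [← hσ, ← AddChar.map_add_eq_mul]
  have : ∀ i j, 2⁻¹ * -c i + 2⁻¹ * d j = 2⁻¹ * (d j - c i) := fun i j => by ring
  simp_rw [this]
  rw [E.diff_inv (fun t => 1 - ψ t) (inv_ne_zero E.two_ne), R_eq E hψ]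

lemma van_cons {n : ℕ} (hn : Even n) (x : Fin n → ℂ) :
    (vandermonde (Fin.cons 1 x : Fin (n+1) → ℂ)).det = (∏ i, (1 - x i)) * (vandermonde x).det := by
  rw [det_vandermonde, Fin.prod_univ_succ]
  congr 1
  · rw [Fin.prod_Ioi_zero]
    have : ∀ i, x i - 1 = (-1) * (1 - x i) := fun i => by ring
    simp only [Fin.cons_succ, Fin.cons_zero]
    rw [prod_congr rfl fun i _ => this i, prod_mul_distrib]
    simp [hn.neg_one_pow]
  · rw [det_vandermonde]
    refine prod_congr rfl fun i _ => ?_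
    rw [Fin.prod_Ioi_succ]
    simp

/-- product of all off-diagonal differences -/
noncomputable def Dd {n : ℕ} (x : Fin n → ℂ) : ℂ := ∏ i, ∏ j ∈ {i}ᶜ, (x i - x j)

lemma van_sq {n : ℕ} (x : Fin n → ℂ) :
    (vandermonde x).det ^ 2 = (∏ i : Fin n, ∏ j ∈ Ioi i, (-1 : ℂ)) * Dd x := by
  have : Dd x = ∏ i, ∏ j ∈ Ioi i, (x j - x i) * (x i - x j) := by
    rw [Dd]
    have h := prod_prod_Ioi_mul_eq_prod_prod_off_diag (fun i j => x j - x i)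
    rw [← h]
    exact prod_congr rfl fun i _ => prod_congr rfl fun j _ => mul_comm _ _
  rw [this, ← prod_mul_distrib, det_vandermonde, ← prod_pow]
  refine prod_congr rfl fun i _ => ?_
  rw [← prod_pow, ← prod_mul_distrib]
  exact prod_congr rfl fun j _ => by ring

lemma Dd_eq {n : ℕ} {x y : Fin n → ℂ} (hn : Even n) (hx : ∏ i, x i = 1)
    (h : (X - C 1) * (Lagrange.nodal univ x * Lagrange.nodal univ y) = (X ^ p - 1 : ℂ[X])) :
    Dd x * (∏ i, (1 - x i)) * ∏ i, ∏ j, (x i - y j) = p ^ n := by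
  have key : ∀ i, (∏ j ∈ {i}ᶜ, (x i - x j)) * (-1) * (1 - x i) * (∏ j, (x i - y j)) * x i = p := by
    intro i
    have h' : Lagrange.nodal univ x * ((X - C 1) * Lagrange.nodal univ y) = (X ^ p - 1 : ℂ[X]) := by
      rw [← h]; ring
    have := eval_deriv h' (Lagrange.eval_nodal_at_node (s := univ) (mem_univ i))
    rw [Lagrange.eval_nodal_derivative_eval_node_eq (mem_univ i)] at this
    rw [eval_mul, Lagrange.eval_nodal, Lagrange.eval_nodal] at this
    rw [← this, compl_eq_univ_sdiff, sdiff_singleton_eq_erase]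
    simp
    ring
  have := prod_congr rfl (fun i (_ : i ∈ univ) => key i)
  simp_rw [prod_mul_distrib, hx] at this
  simp [hn.neg_one_pow] at this
  rw [← this, Dd]

lemma van_xy (E : Enm p m c d) (hψ : Function.Injective ψ) :
    ((vandermonde fun i => ψ (c i)).det * (vandermonde fun i => ψ (d i)).det) ^ 2 * p
      = (p : ℂ) ^ (2 * m) := by
  have hp : (p : ℂ) ≠ 0 := Nat.cast_ne_zero.2 (Fact.out : p.Prime).ne_zero
  have hn : Even (2 * m) := even_two_mul m
  have h1 := Dd_eq hn (prod_psi_c E) (nod_all E hψ)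
  have h2 := Dd_eq (x := fun i => ψ (d i)) (y := fun i => ψ (c i)) hn (prod_psi_d E) (by
    rw [mul_comm (Lagrange.nodal _ _)]; exact nod_all E hψ)
  rw [R1 E hψ] at h1
  rw [R2 E hψ] at h2
  rw [mul_pow, van_sq, van_sq]
  have hs : (∏ i : Fin (2*m), ∏ j ∈ Ioi i, (-1 : ℂ)) ^ 2 = 1 := by
    rw [← prod_pow]
    refine prod_eq_one fun i _ => ?_
    rw [← prod_pow]; simp
  have h3 := FH E hψ
  have hq : (p : ℂ) ^ (2 * m) ≠ 0 := pow_ne_zero _ hp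
  have hq' : (p : ℂ) ^ (2 * m) = p ^ m * p ^ m := by rw [two_mul, pow_add]
  apply mul_right_cancel₀ hq
  generalize (∏ i : Fin (2*m), ∏ j ∈ Ioi i, (-1 : ℂ)) = S at *
  generalize Dd (fun i => ψ (c i)) = D1 at *
  generalize Dd (fun i => ψ (d i)) = D2 at *
  generalize (∏ i, (1 - ψ (c i))) = F at *
  generalize (∏ i, (1 - ψ (d i))) = H at *
  linear_combination (D1 * D2 * p * (p:ℂ)^(2*m)) * hs - D1 * D2 * (p:ℂ)^(2*m) * h3 +
    D1 * D2 * F * H * hq' + (D2 * H * (p:ℂ)^m) * h1 + (p:ℂ)^(2*m) * h2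

end
end Evil

set_option linter.all false
namespace Evil
open Finset Matrix Polynomial

section
variable {p m : ℕ} [Fact p.Prime] {c d : Fin (2*m) → ZMod p} {ψ : AddChar (ZMod p) ℂ}

noncomputable def Pp {n : ℕ} (x : Fin n → ℂ) : ℂ := ∏ i, ∏ j ∈ Ioi i, (x j + x i)

lemma psi_val (t : ZMod p) : ψ 1 ^ t.val = ψ t := by
  rw [← AddChar.map_nsmul_eq_pow]; simp

lemma chi_two_pow (E : Enm p m c d) :
    ((quadraticChar (ZMod p) 2 : ℤ) : ZMod p) = 2 ^ (2 * m) := by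
  have hF : ringChar (ZMod p) ≠ 2 := by
    rw [ZMod.ringChar_zmod_n]; have := E.hp; omega
  rw [quadraticChar_eq_pow_of_char_ne_two' hF, ZMod.card]
  congr 1
  have := E.hp; omega

lemma sum_Ioi (n : ℕ) : (∑ i : Fin n, (Ioi i).card) * 2 = n * (n - 1) := by
  rw [← Finset.sum_range_id_mul_two]
  simp only [Fin.card_Ioi]
  rw [← Finset.sum_range_reflect]
  rw [Finset.sum_range (fun j => n - 1 - j)]

lemma P_sq (E : Enm p m c d) (hψ : Function.Injective ψ) :
    ((Pp fun i => ψ (2⁻¹ * c i)) * (Pp fun i => ψ (2⁻¹ * d i))) ^ 2 = 1 ∧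
    (vandermonde fun i => ψ (c i)).det * (vandermonde fun i => ψ (d i)).det *
    ((vandermonde fun i => ψ (2⁻¹ * c i)).det * (vandermonde fun i => ψ (2⁻¹ * d i)).det) * p =
    p ^ (2 * m) * ((Pp fun i => ψ (2⁻¹ * c i)) * (Pp fun i => ψ (2⁻¹ * d i))) := by
  have hp : (p : ℂ) ≠ 0 := Nat.cast_ne_zero.2 (Fact.out : p.Prime).ne_zero
  have h1 := van_xy E hψ
  have h2 := van_xy (ψ := ψ.mulShift 2⁻¹) E (fun a b h => by
    have := hψ h
    exact mul_left_cancel₀ (inv_ne_zero E.two_ne) this)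
  simp only [AddChar.mulShift_apply] at h2
  have key : ∀ a : Fin (2*m) → ZMod p, (vandermonde fun i => ψ (a i)).det =
      (vandermonde fun i => ψ (2⁻¹ * a i)).det * Pp fun i => ψ (2⁻¹ * a i) := by
    intro a
    rw [det_vandermonde, det_vandermonde, Pp, ← prod_mul_distrib]
    refine prod_congr rfl fun i _ => ?_
    rw [← prod_mul_distrib]
    refine prod_congr rfl fun j _ => ?_
    rw [← psi_half E (a i), ← psi_half E (a j)]; ring
  rw [key c, key d] at h1 ⊢
  generalize (vandermonde fun i => ψ (2⁻¹ * c i)).det = A at *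
  generalize (vandermonde fun i => ψ (2⁻¹ * d i)).det = B at *
  generalize (Pp fun i => ψ (2⁻¹ * c i)) = P1 at *
  generalize (Pp fun i => ψ (2⁻¹ * d i)) = P2 at *
  have hq : (p : ℂ) ^ (2 * m) ≠ 0 := pow_ne_zero _ hp
  constructor
  · apply mul_left_cancel₀ hq
    linear_combination h1 - (P1*P2)^2 * h2
  · linear_combination P1 * P2 * h2

lemma P_sign (E : Enm p m c d) (hψ : Function.Injective ψ) :
    (Pp fun i => ψ (2⁻¹ * c i)) * (Pp fun i => ψ (2⁻¹ * d i)) =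
      ((quadraticChar (ZMod p) 2 : ℤ) : ℂ) := by
  set Q : (Fin (2*m) → ZMod p) → ℤ[X] := fun a =>
    ∏ i, ∏ j ∈ Ioi i, (X ^ (2⁻¹ * a j).val + X ^ (2⁻¹ * a i).val) with hQ
  have hQe : ∀ a, aeval (ψ 1) (Q a) = Pp fun i => ψ (2⁻¹ * a i) := by
    intro a
    simp only [hQ, Pp, map_prod, map_add, map_pow, aeval_X, psi_val]
  have hQ1 : ∀ a, (Q a).eval 1 = 2 ^ (∑ i : Fin (2*m), (Ioi i).card) := by
    intro a
    simp only [hQ, eval_prod, eval_add, eval_pow, eval_X, one_pow]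
    rw [← prod_pow_eq_pow_sum]
    refine prod_congr rfl fun i _ => ?_
    rw [prod_const]; norm_num
  have hpr := psi_prim E hψ
  have hp := (Fact.out : p.Prime)
  have main : ∀ s : ℤ, (Pp fun i => ψ (2⁻¹ * c i)) * (Pp fun i => ψ (2⁻¹ * d i)) = s →
      (s : ZMod p) = quadraticChar (ZMod p) 2 := by
    intro s hs
    have h0 : aeval (ψ 1) (Q c * Q d - C s) = 0 := by
      rw [map_sub, map_mul, hQe, hQe, hs]; simp
    have h1 := minpoly.isIntegrallyClosed_dvd (hpr.isIntegral hp.pos) h0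
    rw [← cyclotomic_eq_minpoly hpr hp.pos] at h1
    obtain ⟨g, hg⟩ := h1
    have h2 := congrArg (fun P => ((P.eval 1 : ℤ) : ZMod p)) hg
    simp only [eval_sub, eval_mul, hQ1, eval_C, eval_one_cyclotomic_prime] at h2
    push_cast at h2
    rw [ZMod.natCast_self, zero_mul, ← pow_add, ← mul_two, sum_Ioi, pow_mul, ← chi_two_pow E] at h2
    have hodd : Odd (2 * m - 1) := by
      have := hp.two_le; have := E.hp
      exact ⟨m - 1, by omega⟩
    rw [← sub_eq_zero.1 h2]
    rcases quadraticChar_dichotomy E.two_ne with h | h <;> rw [h]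
    · simp
    · push_cast
      rw [hodd.neg_one_pow]
  have h2 := E.two_ne
  rcases sq_eq_one_iff.1 (P_sq E hψ).1 with h | h
  · have h3 := main 1 (by rw [h]; simp)
    rw [h]
    rcases quadraticChar_dichotomy E.two_ne with h' | h' <;> rw [h'] at h3 ⊢
    · simp
    · push_cast at h3
      exact absurd (by linear_combination h3) h2
  · have h3 := main (-1) (by rw [h]; simp)
    rw [h]
    rcases quadraticChar_dichotomy E.two_ne with h' | h' <;> rw [h'] at h3 ⊢
    · push_cast at h3
      exact absurd (by linear_combination -h3) h2
    · simp


noncomputable def BL (c d : Fin (2*m) → ZMod p) (ψ : AddChar (ZMod p) ℂ) :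
    Matrix (Fin (2*m+1)) (Fin (2*m+1)) ℂ :=
  Matrix.of fun k l => ∑ t, ((quadraticChar (ZMod p) t : ℤ) : ℂ) *
    ((Lagrange.basis univ (Fin.cons 1 fun i => ψ (c i)) k).eval (ψ (-t)) *
     (Lagrange.basis univ (Fin.cons 1 fun i => ψ (d i)) l).eval (ψ t))

lemma X0_inj (hψ : Function.Injective ψ) {a : Fin (2*m) → ZMod p} (ha : Function.Injective a)
    (h0 : ∀ i, a i ≠ 0) :
    Function.Injective (Fin.cons 1 fun i => ψ (a i) : Fin (2*m+1) → ℂ) := by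
  rw [Fin.cons_injective_iff]
  refine ⟨?_, hψ.comp ha⟩
  rintro ⟨i, hi⟩
  simp only [← AddChar.map_zero_eq_one ψ] at hi
  exact h0 i (hψ hi)

lemma C_fact (E : Enm p m c d) (hψ : Function.Injective ψ) :
    Gs ψ • (Matrix.of fun i j : Fin (2*m+1) =>
      ((quadraticChar (ZMod p) ((j : ℕ) - (i : ℕ) : ZMod p) : ℤ) : ℂ)) =
    (vandermonde (Fin.cons 1 fun i => ψ (c i)))ᵀ * BL c d ψ *
      vandermonde (Fin.cons 1 fun i => ψ (d i)) := by
  ext i j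
  rw [Matrix.smul_apply, of_apply, smul_eq_mul, mul_comm, ← Gs_shift E]
  have h1 : ∀ t : ZMod p, ψ (((j : ℕ) - (i : ℕ) : ZMod p) * t) = ψ (-t) ^ (i : ℕ) * ψ t ^ (j : ℕ) := by
    intro t
    rw [← AddChar.map_nsmul_eq_pow, ← AddChar.map_nsmul_eq_pow, ← AddChar.map_add_eq_mul]
    congr 1
    simp only [nsmul_eq_mul]; ring
  simp_rw [h1]
  have h2 := fun t => lag_pow _ (X0_inj hψ E.c_inj E.c_ne) (ψ (-t)) i
  have h3 := fun t => lag_pow _ (X0_inj hψ E.d_inj E.d_ne) (ψ t) j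
  simp_rw [mul_apply, transpose_apply, vandermonde_apply, BL, of_apply, Finset.sum_mul,
    Finset.mul_sum, Finset.sum_mul]
  rw [sum_congr rfl fun t _ => by rw [h2, h3, Finset.sum_mul_sum, Finset.mul_sum]]
  simp_rw [Finset.mul_sum]
  rw [sum_comm]
  refine (sum_congr rfl fun k _ => sum_comm).trans ?_
  rw [sum_comm]
  refine sum_congr rfl fun l _ => sum_congr rfl fun k _ => sum_congr rfl fun t _ => ?_
  ring

lemma BL_sum (E : Enm p m c d) (k l) :
    BL c d ψ k l =
    ∑ i, (Lagrange.basis univ (Fin.cons 1 fun i => ψ (c i)) k).eval (ψ (c i)) *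
     (Lagrange.basis univ (Fin.cons 1 fun i => ψ (d i)) l).eval (ψ (-c i)) -
    ∑ i, (Lagrange.basis univ (Fin.cons 1 fun i => ψ (c i)) k).eval (ψ (-d i)) *
     (Lagrange.basis univ (Fin.cons 1 fun i => ψ (d i)) l).eval (ψ (d i)) := by
  rw [BL, of_apply, E.sum_all, quadraticChar_zero]
  simp_rw [E.hc, E.hd]
  obtain ⟨σ, hσ⟩ := E.neg_c
  rw [← Equiv.sum_comp σ]
  simp_rw [← hσ]
  simp [sub_eq_add_neg]

end
end Evil

set_option linter.all false
namespace Evil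
open Finset Matrix Polynomial

section
variable {p m : ℕ} [Fact p.Prime] {c d : Fin (2*m) → ZMod p} {ψ : AddChar (ZMod p) ℂ}

lemma psi_ne (t : ZMod p) : ψ t ≠ 0 := fun h => by
  have : ψ t * ψ (-t) = 1 := by rw [← AddChar.map_add_eq_mul]; simp
  rw [h, zero_mul] at this; exact zero_ne_one this

lemma lb {n : ℕ} {x y : Fin n → ℂ}
    (h : (X - C 1) * (Lagrange.nodal univ x * Lagrange.nodal univ y) = (X ^ p - 1 : ℂ[X]))
    (k : Fin (n+1)) (z : ℂ) (hz : z ≠ (Fin.cons 1 x : Fin (n+1) → ℂ) k) :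
    (Lagrange.basis univ (Fin.cons 1 x) k).eval z =
    (z - 1) * (∏ i, (z - x i)) * (((Fin.cons 1 x : Fin (n+1) → ℂ) k *
      (∏ j, ((Fin.cons 1 x : Fin (n+1) → ℂ) k - y j)) / p) *
      (z - (Fin.cons 1 x : Fin (n+1) → ℂ) k)⁻¹) := by
  rw [Lagrange.eval_basis_not_at_node (mem_univ k) hz, wt h, nodal_cons, eval_mul,
    Lagrange.eval_nodal]
  simp

lemma basis_node {n : ℕ} {x : Fin (n+1) → ℂ} (hx : Function.Injective x) (k i : Fin (n+1)) :
    (Lagrange.basis univ x k).eval (x i) = if i = k then 1 else 0 := by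
  split_ifs with h
  · subst h; exact Lagrange.eval_basis_self hx.injOn (mem_univ _)
  · exact Lagrange.eval_basis_of_ne (Ne.symm h) (mem_univ _)

lemma basis_node' (hψ : Function.Injective ψ) {a : Fin (2*m) → ZMod p}
    (ha : Function.Injective a) (h0 : ∀ i, a i ≠ 0) (k : Fin (2*m+1)) (i : Fin (2*m)) :
    (Lagrange.basis univ (Fin.cons 1 fun i => ψ (a i)) k).eval (ψ (a i)) =
      if i.succ = k then 1 else 0 :=
  basis_node (X0_inj hψ ha h0) k i.succ

noncomputable abbrev HH (d : Fin (2*m) → ZMod p) (ψ : AddChar (ZMod p) ℂ) (z : ℂ) : ℂ :=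
  ∏ j, (z - ψ (d j))

lemma BL_eq (E : Enm p m c d) (hψ : Function.Injective ψ) (k l) :
    BL c d ψ k l =
    (Fin.cons (HH d ψ 1) fun i => ψ (2⁻¹ * c i) * HH d ψ (ψ (c i)) : Fin (2*m+1) → ℂ) k *
    ((Fin.cons (HH c ψ 1) fun i => ψ (2⁻¹ * d i) * HH c ψ (ψ (d i)) : Fin (2*m+1) → ℂ) l *
    ((p : ℂ)⁻¹ * bord (Matrix.of fun i j => (ψ (2⁻¹ * d j) - ψ (2⁻¹ * c i)) /
      (1 - ψ (2⁻¹ * c i) * ψ (2⁻¹ * d j))) (Fin.cons 0 fun _ => -1) k l)) := by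
  have hp : (p : ℂ) ≠ 0 := Nat.cast_ne_zero.2 (Fact.out : p.Prime).ne_zero
  have n1 := nod_all E hψ
  have n2 : (X - C 1) * (Lagrange.nodal univ (fun i => ψ (d i)) *
      Lagrange.nodal univ (fun i => ψ (c i))) = (X ^ p - 1 : ℂ[X]) := by
    rw [mul_comm (Lagrange.nodal _ _)]; exact n1
  have hne1 : ∀ i, ψ (-c i) ≠ 1 := fun i h => by
    rw [← AddChar.map_zero_eq_one ψ] at h
    exact E.c_ne i (neg_eq_zero.1 (hψ h))
  have hne2 : ∀ i, ψ (-d i) ≠ 1 := fun i h => by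
    rw [← AddChar.map_zero_eq_one ψ] at h
    exact E.d_ne i (neg_eq_zero.1 (hψ h))
  have hcd : ∀ i j, -c i ≠ d j := fun i j h => by
    obtain ⟨σ, hσ⟩ := E.neg_c
    rw [hσ] at h
    exact E.cd_ne (σ i) j (sub_eq_zero.2 h.symm)
  have rc := fun t => refl_aux (ψ := ψ) E E.neg_c E.sum_c t
  have rd := fun t => refl_aux (ψ := ψ) E E.neg_d E.sum_d t
  have hne3 : ∀ i j, ψ (-c i) ≠ ψ (d j) := fun i j h => hcd i j (hψ h)
  have hne4 : ∀ i j, ψ (-d i) ≠ ψ (c j) := fun i j h => hcd j i (by rw [← hψ h]; simp)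
  rw [BL_sum E]
  simp_rw [basis_node' hψ E.c_inj E.c_ne, basis_node' hψ E.d_inj E.d_ne]
  induction k using Fin.cases with
  | zero =>
    induction l using Fin.cases with
    | zero => simp [Fin.succ_ne_zero, bord]
    | succ s =>
      simp only [Fin.succ_ne_zero, if_false, zero_mul, sum_const_zero, zero_sub, Fin.succ_inj,
        mul_ite, mul_one, mul_zero, sum_ite_eq', mem_univ, if_true]
      rw [lb n1 0 _ (by simpa using hne2 s), rc]
      have := sub_ne_zero.2 (hne2 s)
      simp [bord]
      field_simp
  | succ r =>
    induction l using Fin.cases with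
    | zero =>
      simp only [Fin.succ_ne_zero, if_false, mul_zero, sum_const_zero, sub_zero, Fin.succ_inj,
        ite_mul, one_mul, zero_mul, sum_ite_eq', mem_univ, if_true]
      rw [lb n2 0 _ (by simpa using hne1 r), rd]
      have := sub_ne_zero.2 (hne1 r)
      simp [bord]
      field_simp
    | succ s =>
      simp only [Fin.succ_inj,
        ite_mul, one_mul, zero_mul, sum_ite_eq', mem_univ, if_true, mul_ite, mul_one, mul_zero]
      rw [lb n2 s.succ _ (by simpa using hne3 r s), lb n1 r.succ _ (by simpa using hne4 s r), rc, rd]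
      have h1 := sub_ne_zero.2 (hne3 r s)
      have h2 := sub_ne_zero.2 (hne4 s r)
      simp only [bord, HH, Fin.cons_succ, of_apply]
      have e1 : ψ (-c r) * ψ (c r) = 1 := by rw [← AddChar.map_add_eq_mul]; simp
      have e2 : ψ (-d s) * ψ (d s) = 1 := by rw [← AddChar.map_add_eq_mul]; simp
      have hu : ψ (2⁻¹ * c r) ≠ 0 := psi_ne _
      have hv : ψ (2⁻¹ * d s) ≠ 0 := psi_ne _
      rw [← psi_half E (c r)] at *
      rw [← psi_half E (d s)] at *
      generalize (∏ j, (ψ (2⁻¹ * c r) ^ 2 - ψ (d j))) = P at *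
      generalize (∏ j, (ψ (2⁻¹ * d s) ^ 2 - ψ (c j))) = Q at *
      rw [eq_inv_of_mul_eq_one_left e1] at h1 ⊢
      rw [eq_inv_of_mul_eq_one_left e2] at h2 ⊢
      generalize ψ (2⁻¹ * c r) = u at *
      generalize ψ (2⁻¹ * d s) = v at *
      have h3 : 1 - u ^ 2 * v ^ 2 ≠ 0 := fun h => h1 (by field_simp; linear_combination h)
      have h4 : 1 - u * v ≠ 0 := fun h => h3 (by linear_combination (1 + u * v) * h)
      have h5 : (1 + u * v) ≠ 0 := fun h => h3 (by linear_combination (1 - u * v) * h)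
      have e3 : ((u ^ 2)⁻¹ - v ^ 2)⁻¹ = u ^ 2 / ((1 - u * v) * (1 + u * v)) := by
        rw [inv_eq_iff_eq_inv]; field_simp; ring
      have e4 : ((v ^ 2)⁻¹ - u ^ 2)⁻¹ = v ^ 2 / ((1 - u * v) * (1 + u * v)) := by
        rw [inv_eq_iff_eq_inv]; field_simp; ring
      rw [e3, e4]
      field_simp
      ring


lemma det_C1 (E : Enm p m c d) (hψ : Function.Injective ψ) :
    2 * Gs ψ * (Matrix.of fun i j : Fin (2*m+1) =>
      ((quadraticChar (ZMod p) ((j : ℕ) - (i : ℕ) : ZMod p) : ℤ) : ℂ)).det =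
    ((quadraticChar (ZMod p) 2 : ℤ) : ℂ) *
    ((∏ i, (1 - ψ (2⁻¹ * c i))) * (∏ i, (1 + ψ (2⁻¹ * d i))) -
     (∏ i, (1 + ψ (2⁻¹ * c i))) * (∏ i, (1 - ψ (2⁻¹ * d i)))) := by
  have hp : (p : ℂ) ≠ 0 := Nat.cast_ne_zero.2 (Fact.out : p.Prime).ne_zero
  have hn : Even (2 * m) := even_two_mul m
  have h1 := congrArg det (C_fact E hψ)
  have h2 : BL c d ψ = Matrix.of fun k l =>
    (Fin.cons (HH d ψ 1) fun i => ψ (2⁻¹ * c i) * HH d ψ (ψ (c i)) : Fin (2*m+1) → ℂ) k *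
    (Matrix.of fun k l => 
    (Fin.cons (HH c ψ 1) fun i => ψ (2⁻¹ * d i) * HH c ψ (ψ (d i)) : Fin (2*m+1) → ℂ) l *
    ((p : ℂ)⁻¹ • bord (Matrix.of fun i j => (ψ (2⁻¹ * d j) - ψ (2⁻¹ * c i)) /
      (1 - ψ (2⁻¹ * c i) * ψ (2⁻¹ * d j))) (Fin.cons 0 fun _ => -1)) k l) k l := by
    ext k l
    rw [BL_eq E hψ]
    rfl
  have hi2 := inv_ne_zero E.two_ne
  have h3 := bord_w hn (fun i => ψ (2⁻¹ * c i)) (fun i => ψ (2⁻¹ * d i))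
    (fun i j h => E.d_inj (mul_left_cancel₀ hi2 (hψ h))) (fun i => psi_ne _)
    (fun i j h => by
      rw [← AddChar.map_add_eq_mul, sub_eq_zero, ← AddChar.map_zero_eq_one ψ] at h
      have := hψ h
      rw [← mul_add] at this
      have h4 := (mul_eq_zero.1 this.symm).resolve_left hi2
      obtain ⟨σ, hσ⟩ := E.neg_c
      apply E.cd_ne (σ i) j
      rw [← hσ]; linear_combination h4)
  rw [det_smul, Fintype.card_fin, det_mul, det_mul, det_transpose, van_cons hn, van_cons hn, h2,
    det_mul_column, det_mul_row, det_smul, Fintype.card_fin, Fin.prod_univ_succ,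
    Fin.prod_univ_succ] at h1
  simp only [Fin.cons_zero, Fin.cons_succ, prod_mul_distrib, HH] at h1
  rw [R1 E hψ, R2 E hψ] at h1
  rw [R3 E hψ] at h3
  have hu : ∏ i, ψ (2⁻¹ * c i) = 1 := by rw [← psi_sum, ← mul_sum, E.sum_c]; simp
  have hv : ∏ i, ψ (2⁻¹ * d i) = 1 := by rw [← psi_sum, ← mul_sum, E.sum_d]; simp
  rw [hu, hv] at h1
  have h4 := FH E hψ
  have h5 := (P_sq E hψ).2
  rw [P_sign E hψ] at h5
  have h6 : Gs ψ ^ (2 * m + 1) = Gs ψ * p ^ m := by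
    rw [pow_succ, pow_mul, Gs_sq E hψ, mul_comm]
  rw [h6] at h1
  have hq' : (p : ℂ) ^ (2 * m) = p ^ m * p ^ m := by rw [two_mul, pow_add]
  have hq : (p : ℂ) ^ m ≠ 0 := pow_ne_zero _ hp
  have hq1 : (p : ℂ) ^ (2 * m + 1) * ((p : ℂ)⁻¹ ^ (2 * m + 1)) = 1 := by
    rw [← mul_pow, mul_inv_cancel₀ hp, one_pow]
  rw [pow_succ (p : ℂ), hq'] at hq1
  rw [hq'] at h5
  generalize ((p : ℂ)⁻¹ ^ (2 * m + 1)) = q1 at *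
  generalize (∏ i, (1 - ψ (2⁻¹ * c i))) * (∏ i, (1 + ψ (2⁻¹ * d i))) -
     (∏ i, (1 + ψ (2⁻¹ * c i))) * (∏ i, (1 - ψ (2⁻¹ * d i))) = Z at *
  generalize (∏ i, (1 - ψ (c i))) = F at *
  generalize (∏ i, (1 - ψ (d i))) = H at *
  generalize (vandermonde fun i => ψ (c i)).det = A at *
  generalize (vandermonde fun i => ψ (d i)).det = B at *
  generalize (vandermonde fun i => ψ (2⁻¹ * c i)).det = A' at *
  generalize (vandermonde fun i => ψ (2⁻¹ * d i)).det = B' at *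
  generalize ((quadraticChar (ZMod p) 2 : ℤ) : ℂ) = chi at *
  generalize det (Matrix.of fun i j : Fin (2*m+1) =>
      ((quadraticChar (ZMod p) ((j : ℕ) - (i : ℕ) : ZMod p) : ℤ) : ℂ)) = D at *
  generalize det (bord (Matrix.of fun i j => (ψ (2⁻¹ * d j) - ψ (2⁻¹ * c i)) /
      (1 - ψ (2⁻¹ * c i) * ψ (2⁻¹ * d j))) (Fin.cons 0 fun _ => -1)) = W at *
  generalize Gs ψ = g at *
  generalize (p : ℂ) ^ m = r at *
  have e1 : g * r * D = A * B * p * W := by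
    linear_combination h1 + (r*r*F*H*A*B*W*q1) * h4 + (r*r*q1*p*A*B*W)*h4 + A*B*p*W*hq1
  have e2 : 2 * (g * r * D) * r = A * B * (A' * B') * p * Z := by
    linear_combination 2 * r * e1 + A * B * p * h3
  apply mul_left_cancel₀ (mul_ne_zero hq hq)
  linear_combination e2 + Z * h5

lemma chi_two (E : Enm p m c d) :
    quadraticChar (ZMod p) 2 = if p % 8 = 1 then 1 else -1 := by
  have hF : ringChar (ZMod p) ≠ 2 := by
    rw [ZMod.ringChar_zmod_n]; have := E.hp; omega
  rw [quadraticChar_two hF, ZMod.card, ZMod.χ₈_nat_eq_if_mod_eight]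
  have := E.hp
  split_ifs <;> first | rfl | omega

lemma det_C (E : Enm p m c d) (hψ : Function.Injective ψ) :
    2 * Gs ψ * (Matrix.of fun i j : Fin (2*m+1) =>
      ((quadraticChar (ZMod p) ((j : ℕ) - (i : ℕ) : ZMod p) : ℤ) : ℂ)).det =
    if p % 8 = 1 then (∏ i, (1 - ψ (c i))) - (∏ i, (1 - ψ (d i)))
    else (∏ i, (1 - ψ (c i))) ^ 2 / (∏ i, (1 - ψ (d i))) -
      (∏ i, (1 - ψ (d i))) ^ 2 / (∏ i, (1 - ψ (c i))) := by
  have hp : (p : ℂ) ≠ 0 := Nat.cast_ne_zero.2 (Fact.out : p.Prime).ne_zero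
  have h4 := FH E hψ
  have hF : (∏ i, (1 - ψ (c i))) ≠ 0 := fun h => hp (by rw [← h4, h, zero_mul])
  have hH : (∏ i, (1 - ψ (d i))) ≠ 0 := fun h => hp (by rw [← h4, h, mul_zero])
  have key : ∀ a : Fin (2*m) → ZMod p, (∏ i, (1 - ψ (2⁻¹ * a i))) * (∏ i, (1 + ψ (2⁻¹ * a i))) =
      ∏ i, (1 - ψ (a i)) := fun a => by
    rw [← prod_mul_distrib]
    refine prod_congr rfl fun i _ => ?_
    rw [← psi_half E (a i)]; ring
  have k1 := key c
  have k2 := key d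
  have hchi : quadraticChar (ZMod p) (2⁻¹) = quadraticChar (ZMod p) 2 := by
    have h : quadraticChar (ZMod p) (2⁻¹) * quadraticChar (ZMod p) 2 = 1 := by
      rw [← map_mul, inv_mul_cancel₀ E.two_ne, map_one]
    rcases quadraticChar_dichotomy E.two_ne with h' | h' <;> rw [h'] at h ⊢ <;> linarith
  rw [det_C1 E hψ]
  have h2 := chi_two E
  split_ifs at h2 ⊢ with h8
  · rw [h2] at hchi ⊢
    obtain ⟨σ, hσ⟩ := E.perm_cc hchi
    obtain ⟨τ, hτ⟩ := E.perm_dd hchi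
    have e1 : (∏ i, (1 - ψ (2⁻¹ * c i))) = ∏ i, (1 - ψ (c i)) := by
      simp_rw [hσ]; exact Equiv.prod_comp σ (fun i => 1 - ψ (c i))
    have e2 : (∏ i, (1 - ψ (2⁻¹ * d i))) = ∏ i, (1 - ψ (d i)) := by
      simp_rw [hτ]; exact Equiv.prod_comp τ (fun i => 1 - ψ (d i))
    rw [e1] at k1
    rw [e2] at k2
    have k1' := mul_left_cancel₀ hF (k1.trans (mul_one _).symm)
    have k2' := mul_left_cancel₀ hH (k2.trans (mul_one _).symm)
    rw [e1, e2, k1', k2']; simp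
  · rw [h2] at hchi ⊢
    obtain ⟨σ, hσ⟩ := E.perm_cd hchi
    obtain ⟨τ, hτ⟩ := E.perm_dc hchi
    have e1 : (∏ i, (1 - ψ (2⁻¹ * c i))) = ∏ i, (1 - ψ (d i)) := by
      simp_rw [hσ]; exact Equiv.prod_comp σ (fun i => 1 - ψ (d i))
    have e2 : (∏ i, (1 - ψ (2⁻¹ * d i))) = ∏ i, (1 - ψ (c i)) := by
      simp_rw [hτ]; exact Equiv.prod_comp τ (fun i => 1 - ψ (c i))
    rw [e1] at k1
    rw [e2] at k2
    rw [e1, e2, eq_div_of_mul_eq hH ((mul_comm _ _).trans k1), eq_div_of_mul_eq hF ((mul_comm _ _).trans k2)]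
    push_cast
    field_simp
    ring

end
end Evil

set_option linter.all false
namespace Evil
open Finset Filter Topology MeasureTheory

lemma dirichlet_lim (f : ℕ → ℂ) (B : ℝ) (h0 : f 0 = 0) (h1 : ∀ n, ‖f n‖ ≤ 1)
    (hB : ∀ n, ‖∑ k ∈ Icc 0 n, f k‖ ≤ B) :
    ∃ l : ℂ, Tendsto (fun n => ∑ k ∈ range n, f k / k) atTop (𝓝 l) ∧
      Tendsto (fun s : ℝ => LSeries f s) (𝓝[>] 1) (𝓝 l) := by
  have hB0 : 0 ≤ B := (norm_nonneg _).trans (hB 0)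
  set A : ℝ → ℂ := fun t => ∑ k ∈ Icc 0 ⌊t⌋₊, f k with hA
  have hA' : ∀ n, ∑ k ∈ Icc 1 n, f k = ∑ k ∈ Icc 0 n, f k := by
    intro n
    rw [← Finset.sum_subset (s₁ := Icc 1 n) (s₂ := Icc 0 n)]
    · intro x hx; simp at hx ⊢; omega
    · intro x hx hx'
      have : x = 0 := by simp at hx hx'; omega
      rw [this, h0]
  have hAm : Measurable A :=
    (measurable_from_nat (f := fun n => ∑ k ∈ Icc 0 n, f k)).comp Nat.measurable_floor
  have hAb : ∀ t, ‖A t‖ ≤ B := fun t => hB _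
  refine ⟨∫ t in Set.Ioi (1:ℝ), A t * (t : ℂ) ^ (-(2:ℂ)), ?_, ?_⟩
  · set g : ℝ → ℂ := fun t => ((t : ℂ))⁻¹ with hg
    have hd : ∀ t ∈ Set.Ici (1 : ℝ), HasDerivAt g (-((t : ℂ) ^ 2)⁻¹) t := by
      intro t ht
      have ht0 : (t : ℂ) ≠ 0 := by
        have : (0:ℝ) < t := lt_of_lt_of_le one_pos ht
        exact_mod_cast this.ne'
      have := (hasDerivAt_inv ht0).comp_ofReal
      simpa using this
    have hdd : ∀ t ∈ Set.Ici (1 : ℝ), deriv g t = -((t : ℂ) ^ 2)⁻¹ := fun t ht => (hd t ht).deriv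
    have key := tendsto_sum_mul_atTop_nhds_one_sub_integral₀ (f := g) (c := f) (l := 0) h0
      (fun t ht => (hd t ht).differentiableAt) ?_ ?_ (g := fun t : ℝ => t ^ (-2 : ℝ)) ?_ ?_
    · rw [zero_sub, ← integral_neg] at key
      have h2 : ∫ t in Set.Ioi (1:ℝ), A t * (t : ℂ) ^ (-(2:ℂ)) =
          ∫ t in Set.Ioi (1:ℝ), -(deriv g t * ∑ k ∈ Icc 0 ⌊t⌋₊, f k) := by
        refine setIntegral_congr_fun measurableSet_Ioi fun t ht => ?_
        have ht1 : (1:ℝ) < t := ht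
        show A t * _ = -(deriv g t * _)
        rw [hdd t (Set.mem_Ici.2 ht1.le), Complex.cpow_neg]
        simp only [hA]
        norm_cast
        push_cast
        ring
      rw [h2]
      rw [← tendsto_add_atTop_iff_nat 1]
      refine key.congr fun n => ?_
      rw [Nat.range_succ_eq_Icc_zero]
      refine sum_congr rfl fun k _ => ?_
      simp [hg, div_eq_mul_inv, mul_comm]
    · refine ContinuousOn.locallyIntegrableOn ?_ measurableSet_Ici
      refine ContinuousOn.congr (f := fun t : ℝ => -((t : ℂ) ^ 2)⁻¹) ?_ hdd
      refine ContinuousOn.neg (ContinuousOn.inv₀ (by fun_prop) ?_)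
      intro t ht
      have : (0:ℝ) < t := lt_of_lt_of_le one_pos ht
      exact_mod_cast (pow_pos this 2).ne'
    · apply squeeze_zero_norm (a := fun n : ℕ => (n:ℝ)⁻¹ * B)
      · intro n
        rw [norm_mul]
        simp only [hg, norm_inv]
        refine mul_le_mul ?_ (hB n) (norm_nonneg _) (by positivity)
        simp
      · simpa using (tendsto_inv_atTop_nhds_zero_nat (𝕜 := ℝ)).mul_const B
    · apply Asymptotics.IsBigO.of_bound B
      filter_upwards [eventually_ge_atTop (1:ℝ)] with t ht
      have : (0:ℝ) < t := lt_of_lt_of_le one_pos ht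
      rw [hdd t ht, norm_mul, mul_comm]
      refine mul_le_mul (hAb t) ?_ (norm_nonneg _) hB0
      rw [Real.rpow_neg this.le, norm_neg, norm_inv]
      simp
    · exact ⟨Set.Ioi 1, Ioi_mem_atTop 1, integrableOn_Ioi_rpow_of_lt (by norm_num) one_pos⟩
  · have hs : ∀ s : ℝ, 1 < s → LSeries f s = s * ∫ t in Set.Ioi (1:ℝ), A t * (t : ℂ) ^ (-((s:ℂ) + 1)) := by
      intro s hs
      have hS : LSeriesSummable f s := by
        refine LSeriesSummable_of_bounded_of_one_lt_re (m := 1) (fun n _ => h1 n) (by simpa using hs)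
      rw [LSeries_eq_mul_integral f (r := 0) le_rfl (by simp; linarith) hS]
      · simp only [hA', hA]
      · apply Asymptotics.IsBigO.of_bound B
        filter_upwards with n
        rw [hA']; simpa using hB n
    have hlim : Tendsto (fun s : ℝ => ∫ t in Set.Ioi (1:ℝ), A t * (t : ℂ) ^ (-((s:ℂ) + 1)))
        (𝓝[>] 1) (𝓝 (∫ t in Set.Ioi (1:ℝ), A t * (t : ℂ) ^ (-(2:ℂ)))) := by
      apply tendsto_integral_filter_of_dominated_convergence (fun t : ℝ => B * t ^ (-2 : ℝ))
      · filter_upwards with s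
        refine (hAm.mul ?_).aestronglyMeasurable
        exact (Complex.measurable_ofReal).pow_const _
      · filter_upwards [self_mem_nhdsWithin] with s hs
        rw [ae_restrict_iff' measurableSet_Ioi]
        filter_upwards with t ht
        have ht1 : (1:ℝ) < t := ht
        have hs1 : (1:ℝ) < s := hs
        rw [norm_mul]
        refine mul_le_mul (hAb t) ?_ (norm_nonneg _) hB0
        rw [Complex.norm_cpow_eq_rpow_re_of_pos (by linarith)]
        apply Real.rpow_le_rpow_of_exponent_le ht1.le
        simp; linarith
      · exact (integrableOn_Ioi_rpow_of_lt (by norm_num) one_pos).const_mul B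
      · rw [ae_restrict_iff' measurableSet_Ioi]
        filter_upwards with t ht
        have ht1 : (1:ℝ) < t := ht
        refine Tendsto.const_mul _ ?_
        have ht0 : (t : ℂ) ≠ 0 := by exact_mod_cast (by linarith : t ≠ 0)
        have : ContinuousAt (fun s : ℝ => (t : ℂ) ^ (-((s:ℂ) + 1))) 1 := by
          refine ContinuousAt.const_cpow (by fun_prop) (Or.inl ht0)
        have h := this.tendsto
        have e : (-(((1:ℝ):ℂ) + 1)) = -2 := by push_cast; ring
        rw [e] at h
        exact h.mono_left nhdsWithin_le_nhds
    have h3 : Tendsto (fun s : ℝ => (s : ℂ)) (𝓝[>] 1) (𝓝 1) := by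
      have := (Complex.continuous_ofReal.tendsto 1).mono_left (nhdsWithin_le_nhds (s := Set.Ioi 1))
      simpa using this
    have h4 := h3.mul hlim
    rw [one_mul] at h4
    refine h4.congr' ?_
    filter_upwards [self_mem_nhdsWithin] with s hs'
    exact (hs s hs').symm

end Evil

set_option linter.all false
namespace Evil
open Finset Filter Topology

section
variable {p m : ℕ} [Fact p.Prime] {c d : Fin (2*m) → ZMod p} {ψ : AddChar (ZMod p) ℂ}

lemma exists_psi (E : Enm p m c d) : ∃ ψ : AddChar (ZMod p) ℂ, Function.Injective ψ ∧
    Gs ψ = ((Real.sqrt p : ℝ) : ℂ) := by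
  have hp0 : (0:ℝ) ≤ p := by positivity
  have key : ∀ ψ : AddChar (ZMod p) ℂ, Function.Injective ψ →
      Gs ψ = ((Real.sqrt p : ℝ) : ℂ) ∨ Gs ψ = -((Real.sqrt p : ℝ) : ℂ) := by
    intro ψ hψ
    have h := Gs_sq E hψ
    apply sq_eq_sq_iff_eq_or_eq_neg.1
    rw [h]
    have := Real.sq_sqrt hp0
    exact_mod_cast this.symm
  have hi : Function.Injective (ZMod.stdAddChar (N := p)) := ZMod.injective_stdAddChar
  rcases key _ hi with h | h
  · exact ⟨_, hi, h⟩
  · have hm : 0 < 2 * m := by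
      have := E.hp; have := (Fact.out : p.Prime).one_lt; omega
    set a := d ⟨0, hm⟩ with ha
    have ha0 : a ≠ 0 := E.d_ne _
    refine ⟨AddChar.mulShift ZMod.stdAddChar a, ?_, ?_⟩
    · intro x y hxy
      simp only [AddChar.mulShift_apply] at hxy
      exact mul_left_cancel₀ ha0 (hi hxy)
    · have := Gs_shift (ψ := ZMod.stdAddChar) E a
      rw [Gs]
      simp only [AddChar.mulShift_apply]
      rw [this, h, E.hd]
      simp

lemma psi_norm (t : ZMod p) : ‖ψ t‖ = 1 := by
  exact AddChar.norm_apply ψ t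

lemma psi_conj (t : ZMod p) : (starRingEnd ℂ) (ψ t) = ψ (-t) := by
  exact (AddChar.map_neg_eq_conj ψ t).symm

lemma re_pos (hψ : Function.Injective ψ) {t : ZMod p} (ht : t ≠ 0) : 0 < (1 - ψ t).re := by
  have h1 : ψ t ≠ 1 := fun h => ht (hψ (by rw [h, AddChar.map_zero_eq_one]))
  have h2 := psi_norm (ψ := ψ) t
  have h3 : (ψ t).re ^ 2 + (ψ t).im ^ 2 = 1 := by
    have := Complex.sq_norm (ψ t)
    rw [h2, Complex.normSq_apply] at this
    nlinarith
  have h4 : (ψ t).re ≤ 1 := by nlinarith [sq_nonneg (ψ t).im]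
  rw [Complex.sub_re, Complex.one_re, sub_pos]
  refine lt_of_le_of_ne h4 fun h => h1 ?_
  apply Complex.ext
  · simpa using h
  · rw [h] at h3; simp; nlinarith

lemma log_sum (hψ : Function.Injective ψ) {k : ℕ} (a : Fin k → ZMod p) (ha : ∀ i, a i ≠ 0)
    (σ : Equiv.Perm (Fin k)) (hσ : ∀ i, - a i = a (σ i)) :
    ∃ S : ℝ, ∑ i, Complex.log (1 - ψ (a i)) = S ∧ ∏ i, (1 - ψ (a i)) = ((Real.exp S : ℝ) : ℂ) := by
  have hc : (starRingEnd ℂ) (∑ i, Complex.log (1 - ψ (a i))) = ∑ i, Complex.log (1 - ψ (a i)) := by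
    rw [map_sum, ← Equiv.sum_comp σ]
    refine sum_congr rfl fun i _ => ?_
    rw [← hσ, ← psi_conj]
    have hre := re_pos hψ (ha (σ i))
    rw [← hσ] at hre
    rw [← Complex.log_conj, map_sub, map_one, psi_conj, psi_conj, neg_neg]
    rw [psi_conj, Ne, Complex.arg_eq_pi_iff]
    rintro ⟨h, -⟩; linarith
  obtain ⟨S, hS⟩ := Complex.conj_eq_iff_real.1 hc
  refine ⟨S, hS, ?_⟩
  rw [Complex.ofReal_exp, ← hS, Complex.exp_sum]
  refine prod_congr rfl fun i _ => ?_
  rw [Complex.exp_log]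
  intro h
  have := re_pos hψ (ha i)
  rw [h] at this; simp at this

/-- the character as a function on naturals -/
noncomputable def chi (p : ℕ) [Fact p.Prime] (n : ℕ) : ℂ := ((quadraticChar (ZMod p) (n : ZMod p) : ℤ) : ℂ)

lemma chi_norm (n : ℕ) : ‖chi p n‖ ≤ 1 := by
  unfold chi
  by_cases h : (n : ZMod p) = 0
  · simp [h]
  · rcases quadraticChar_dichotomy h with h | h <;> simp [h]

lemma chi_part (E : Enm p m c d) (n : ℕ) : ‖∑ k ∈ Icc 0 n, chi p k‖ ≤ p := by
  have hp0 : 0 < p := (Fact.out : p.Prime).pos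
  have hF : ringChar (ZMod p) ≠ 2 := by
    rw [ZMod.ringChar_zmod_n]; have := E.hp; omega
  have hper : ∀ n, chi p (p + n) = chi p n := by intro n; simp [chi]
  have hfull : ∑ k ∈ range p, chi p k = 0 := by
    have h1 : ∑ t : ZMod p, ((quadraticChar (ZMod p) t : ℤ) : ℂ) = 0 := by
      exact_mod_cast quadraticChar_sum_zero hF
    rw [← h1]
    refine sum_bij (fun k _ => (k : ZMod p)) (fun _ _ => mem_univ _) ?_ ?_ (fun _ _ => rfl)
    · intro a ha b hb h
      rw [ZMod.natCast_eq_natCast_iff'] at h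
      rwa [Nat.mod_eq_of_lt (mem_range.1 ha), Nat.mod_eq_of_lt (mem_range.1 hb)] at h
    · intro b _
      exact ⟨b.val, mem_range.2 (ZMod.val_lt b), by simp⟩
  have hr : ∀ n, ‖∑ k ∈ range n, chi p k‖ ≤ p := by
    intro n
    induction n using Nat.strong_induction_on with
    | _ n ih =>
      by_cases hn : n < p
      · refine (norm_sum_le _ _).trans ?_
        refine (sum_le_sum fun k _ => chi_norm k).trans ?_
        simp; exact_mod_cast hn.le
      · obtain ⟨k, rfl⟩ := Nat.exists_eq_add_of_le (not_lt.1 hn)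
        rw [sum_range_add, hfull, zero_add]
        simp only [hper]
        exact ih k (by omega)
  rw [← Nat.range_succ_eq_Icc_zero]
  exact hr _

lemma chi_series (E : Enm p m c d) (hψ : Function.Injective ψ) (x : ℝ) (hx : 0 ≤ x) (hx1 : x < 1) :
    HasSum (fun n : ℕ => chi p n / n * (x : ℂ) ^ n)
      ((Gs ψ)⁻¹ * ∑ t : ZMod p, ((quadraticChar (ZMod p) t : ℤ) : ℂ) * (- Complex.log (1 - ψ t * x))) := by
  have hG : Gs ψ ≠ 0 := by
    intro h
    have := Gs_sq E hψ
    rw [h] at this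
    have hp0 : (p:ℂ) ≠ 0 := by exact_mod_cast (Fact.out : p.Prime).ne_zero
    exact hp0 (by rw [← this]; simp)
  have h1 : ∀ t : ZMod p, HasSum (fun n : ℕ => ((quadraticChar (ZMod p) t : ℤ) : ℂ) * ((ψ t * x) ^ n / n))
      (((quadraticChar (ZMod p) t : ℤ) : ℂ) * (- Complex.log (1 - ψ t * x))) := by
    intro t
    refine HasSum.mul_left _ (Complex.hasSum_taylorSeries_neg_log ?_)
    rw [norm_mul, psi_norm]; simpa [abs_of_nonneg hx] using hx1
  have h2 := (hasSum_sum (s := univ) fun t _ => h1 t).mul_left (Gs ψ)⁻¹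
  convert! h2 using 2 with n
  have h3 := Gs_shift (ψ := ψ) E (n : ZMod p)
  unfold chi
  rw [eq_inv_mul_iff_mul_eq₀ hG]
  have : ∀ t : ZMod p, ψ t ^ n = ψ (n * t) := by
    intro t; rw [← AddChar.map_nsmul_eq_pow]; simp
  simp only [mul_pow, this]
  calc _ = (((quadraticChar (ZMod p) (n : ZMod p) : ℤ) : ℂ) * Gs ψ) * ((x:ℂ) ^ n / n) := by ring
    _ = _ := by rw [← h3, sum_mul]; refine sum_congr rfl fun t _ => by ring

lemma Lone (hp : p % 4 = 1) : ∃ (m : ℕ) (c d : Fin (2*m) → ZMod p) (E : Enm p m c d) (ψ : AddChar (ZMod p) ℂ)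
    (F H : ℝ), Function.Injective ψ ∧ Gs ψ = ((Real.sqrt p : ℝ) : ℂ) ∧ 0 < F ∧ 0 < H ∧
    ∏ i, (1 - ψ (c i)) = (F : ℂ) ∧ ∏ i, (1 - ψ (d i)) = (H : ℂ) ∧ F * H = p ∧
    Tendsto (fun s : ℝ => LSeries (chi p) s) (𝓝[>] 1) (𝓝 (((Real.log H - Real.log F) / Real.sqrt p : ℝ) : ℂ)) := by
  have hpm : p = 4 * (p / 4) + 1 := by omega
  obtain ⟨c, d, E⟩ := exists_enm hpm
  obtain ⟨ψ, hψ, hG⟩ := exists_psi E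
  obtain ⟨σ, hσ⟩ := E.neg_c
  obtain ⟨τ, hτ⟩ := E.neg_d
  obtain ⟨S, hS, hF⟩ := log_sum hψ c E.c_ne σ hσ
  obtain ⟨T, hT, hH⟩ := log_sum hψ d E.d_ne τ hτ
  refine ⟨_, c, d, E, ψ, Real.exp S, Real.exp T, hψ, hG, Real.exp_pos _, Real.exp_pos _, hF, hH, ?_, ?_⟩
  · have := FH E hψ
    rw [hF, hH] at this
    exact_mod_cast this
  · rw [Real.log_exp, Real.log_exp]
    obtain ⟨l, hl, hL⟩ := dirichlet_lim (chi p) p (by simp [chi]) chi_norm (chi_part E)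
    have hab := Complex.tendsto_tsum_powerSeries_nhdsWithin_lt hl
    rw [tendsto_map'_iff] at hab
    have h2 : Tendsto (fun x : ℝ => (Gs ψ)⁻¹ * ∑ t : ZMod p, ((quadraticChar (ZMod p) t : ℤ) : ℂ) * (- Complex.log (1 - ψ t * x)))
        (𝓝[<] 1) (𝓝 ((Gs ψ)⁻¹ * ∑ t : ZMod p, ((quadraticChar (ZMod p) t : ℤ) : ℂ) * (- Complex.log (1 - ψ t)))) := by
      refine Tendsto.const_mul _ (tendsto_finsetSum _ fun t _ => ?_)
      by_cases ht : t = 0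
      · simp [ht]
      · refine Tendsto.const_mul _ (Tendsto.neg ?_)
        have hc : ContinuousAt (fun x : ℝ => Complex.log (1 - ψ t * x)) 1 := by
          refine ContinuousAt.clog (by fun_prop) ?_
          left; simpa using re_pos hψ ht
        have := hc.tendsto.mono_left (nhdsWithin_le_nhds (s := Set.Iio 1))
        simpa using this
    have h3 := hab.congr' (f₂ := fun x : ℝ => (Gs ψ)⁻¹ * ∑ t : ZMod p, ((quadraticChar (ZMod p) t : ℤ) : ℂ) * (- Complex.log (1 - ψ t * x))) (by
      filter_upwards [Ioo_mem_nhdsLT (show (0:ℝ) < 1 by norm_num)] with x hx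
      exact (chi_series E hψ x hx.1.le hx.2).tsum_eq)
    have h4 := tendsto_nhds_unique h3 h2
    rw [h4] at hL
    convert! hL using 2
    rw [E.sum_all]
    simp only [E.hc, E.hd]
    rw [hG]
    simp
    rw [hS, hT]
    ring
end
end Evil

set_option linter.all false
namespace Evil
open Finset NumberField

structure Quad (p m : ℕ) (K : Type) [Field K] [NumberField K] (θ : 𝓞 K) (σ : K ≃ₐ[ℚ] K) : Prop where
  pr : p.Prime
  hp : p = 4 * m + 1
  deg : Module.finrank ℚ K = 2
  sq : θ ^ 2 = θ + m
  conj : σ (algebraMap (𝓞 K) K θ) = 1 - (algebraMap (𝓞 K) K θ)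
  rep : ∀ y : 𝓞 K, ∃ a b : ℤ, y = a + b * θ
  ind : ∀ a b : ℤ, (a : 𝓞 K) + b * θ = 0 → a = 0 ∧ b = 0

lemma rat_int {K : Type} [Field K] [NumberField K] (r : ℚ) (h : IsIntegral ℤ (r : K)) :
    ∃ n : ℤ, r = n := by
  have h1 : IsIntegral ℤ (algebraMap ℚ K r) := by simpa using h
  have h2 : IsIntegral ℤ r := (isIntegral_algebraMap_iff (algebraMap ℚ K).injective).1 h1
  obtain ⟨n, hn⟩ := IsIntegrallyClosed.isIntegral_iff.1 h2
  exact ⟨n, by simpa using hn.symm⟩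

lemma exists_quad (p : ℕ) (hpr : p.Prime) (hp : p % 4 = 1)
    (K : Type) [Field K] [NumberField K]
    (hdeg : Module.finrank ℚ K = 2) (x : K) (hx : x ^ 2 = (p : K)) :
    ∃ θ σ, Quad p (p / 4) K θ σ ∧ x = 2 * (algebraMap (𝓞 K) K θ) - 1 := by
  have hpm : p = 4 * (p / 4) + 1 := by omega
  set m := p / 4 with hm
  have hpK : (p : K) = 4 * m + 1 := by exact_mod_cast congrArg (Nat.cast : ℕ → K) hpm
  -- p is not a rational square
  have hns : ∀ r : ℚ, r ^ 2 ≠ p := by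
    intro r hr
    have := hpr.irrational_sqrt
    apply this
    refine ⟨|r|, ?_⟩
    have h1 : ((|r| : ℚ) : ℝ) ^ 2 = p := by
      have : |r| ^ 2 = (p : ℚ) := by rw [sq_abs, hr]
      exact_mod_cast this
    rw [← h1, Real.sqrt_sq]
    exact_mod_cast abs_nonneg r
  have hli : ∀ u v : ℚ, (u : K) + v * x = 0 → u = 0 ∧ v = 0 := by
    intro u v h
    by_cases hv : v = 0
    · subst hv; simp at h; exact ⟨h, rfl⟩
    · exfalso
      have hvK : (v : K) ≠ 0 := by exact_mod_cast hv
      have h2 : x = ((-u / v : ℚ) : K) := by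
        push_cast; field_simp; linear_combination h
      apply hns (-u / v)
      rw [h2] at hx
      exact_mod_cast hx
  have hLI : LinearIndependent ℚ ![(1:K), x] := by
    rw [LinearIndependent.pair_iff]
    intro s t h
    simp only [Algebra.smul_def] at h
    exact hli s t (by simpa using h)
  have hspan := hLI.span_eq_top_of_card_eq_finrank' (by simp [hdeg])
  have hrep : ∀ y : K, ∃ u v : ℚ, y = u + v * x := by
    intro y
    have : y ∈ Submodule.span ℚ (Set.range ![(1:K), x]) := by rw [hspan]; trivial
    simp only [Matrix.range_cons, Matrix.range_empty, Set.union_empty] at this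
    rw [Set.singleton_union, Submodule.mem_span_pair] at this
    obtain ⟨u, v, h⟩ := this
    exact ⟨u, v, by rw [← h]; simp [Algebra.smul_def]⟩
  haveI : Algebra.IsQuadraticExtension ℚ K := ⟨hdeg⟩
  haveI : IsGalois ℚ K := inferInstance
  have hcard := IsGalois.card_aut_eq_finrank ℚ K
  obtain ⟨σ, hσ1⟩ : ∃ σ : K ≃ₐ[ℚ] K, σ ≠ 1 := by
    by_contra! h
    haveI : Subsingleton (K ≃ₐ[ℚ] K) := ⟨fun a b => by rw [h a, h b]⟩
    rw [hdeg, Nat.card_eq_one_iff_unique.2 ⟨inferInstance, inferInstance⟩] at hcard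
    omega
  have hσrat : ∀ r : ℚ, σ (r : K) = r := fun r => by simp
  have hσ : σ x = -x := by
    have h1 : (σ x) ^ 2 = x ^ 2 := by rw [← map_pow, hx]; simp
    rcases sq_eq_sq_iff_eq_or_eq_neg.1 h1 with h | h
    · exfalso; apply hσ1
      ext y
      obtain ⟨u, v, rfl⟩ := hrep y
      simp [h]
    · exact h
  have hint : IsIntegral ℤ ((1 + x) / 2) := by
    refine ⟨Polynomial.X ^ 2 - Polynomial.X - Polynomial.C (m : ℤ), ?_, ?_⟩
    · monicity!
    · simp
      linear_combination (1/4 : K) * hx + (1/4 : K) * hpK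
  set θ : 𝓞 K := ⟨(1 + x) / 2, hint⟩ with hθ
  have hθK : (algebraMap (𝓞 K) K θ) = (1 + x) / 2 := rfl
  refine ⟨θ, σ, ⟨hpr, hpm, hdeg, ?_, ?_, ?_, ?_⟩, by rw [hθK]; ring⟩
  · apply FaithfulSMul.algebraMap_injective (𝓞 K) K
    rw [map_pow, map_add, map_natCast, hθK]
    linear_combination (1/4 : K) * hx + (1/4 : K) * hpK
  · rw [hθK, map_div₀, map_add, hσ, map_one, map_ofNat]; ring
  · intro y
    obtain ⟨u, v, huv⟩ := hrep (algebraMap (𝓞 K) K y)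
    have hy : IsIntegral ℤ (algebraMap (𝓞 K) K y) := y.isIntegral_coe
    have hσy : IsIntegral ℤ (σ (algebraMap (𝓞 K) K y)) := hy.map (σ.toAlgHom.restrictScalars ℤ)
    have hσy' : σ (algebraMap (𝓞 K) K y) = u - v * x := by rw [huv]; simp [hσ]; ring
    obtain ⟨A, hA⟩ := rat_int (K := K) (2 * u) (by
      have := hy.add hσy
      rw [hσy', huv] at this
      have e : ((2 * u : ℚ) : K) = (u : K) + v * x + (u - v * x) := by push_cast; ring
      rw [e]; exact this)
    obtain ⟨N, hN⟩ := rat_int (K := K) (u ^ 2 - p * v ^ 2) (by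
      have := hy.mul hσy
      rw [hσy', huv] at this
      have e : ((u ^ 2 - p * v ^ 2 : ℚ) : K) = ((u : K) + v * x) * (u - v * x) := by
        push_cast; linear_combination (v:K)^2 * hx
      rw [e]; exact this)
    obtain ⟨z, hz⟩ := rat_int (K := K) (p * (2 * v)) (by
      refine IsIntegral.of_pow (n := 2) (by norm_num) ?_
      have : ((p * (2 * v) : ℚ) : K) ^ 2 = ((p * (A ^ 2 - 4 * N) : ℤ) : K) := by
        have : ((p * (2 * v) : ℚ)) ^ 2 = ((p * (A ^ 2 - 4 * N) : ℤ) : ℚ) := by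
          push_cast; rw [← hA, ← hN]; ring
        exact_mod_cast this
      rw [this]
      exact isIntegral_algebraMap (R := ℤ) (A := K) (x := (p * (A ^ 2 - 4 * N) : ℤ)))
    have hz2 : z ^ 2 = p * (A ^ 2 - 4 * N) := by
      have : (z : ℚ) ^ 2 = ((p * (A ^ 2 - 4 * N) : ℤ) : ℚ) := by
        push_cast; rw [← hA, ← hN, ← hz]; ring
      exact_mod_cast this
    have hpz : (p : ℤ) ∣ z := (Nat.prime_iff_prime_int.1 hpr).dvd_of_dvd_pow (n := 2) ⟨_, hz2⟩
    obtain ⟨B, rfl⟩ := hpz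
    have hp0 : (p : ℤ) ≠ 0 := by exact_mod_cast hpr.ne_zero
    have hp0' : (p : ℚ) ≠ 0 := by exact_mod_cast hpr.ne_zero
    have hB : 2 * v = B := by
      apply mul_left_cancel₀ hp0'; rw [hz]; push_cast; ring
    have hAB : (p : ℤ) * B ^ 2 = A ^ 2 - 4 * N := by
      apply mul_left_cancel₀ hp0; rw [← hz2]; ring
    have hpar : (2 : ℤ) ∣ A - B := by
      have hpm' : (p : ℤ) = 4 * m + 1 := by exact_mod_cast hpm
      have h4 : (A - B) * (A + B) = 4 * (m * B ^ 2 + N) := by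
        rw [hpm'] at hAB; linear_combination -hAB
      have h5 : (2:ℤ) ∣ (A - B) * (A + B) := ⟨2 * (m * B ^ 2 + N), by rw [h4]; ring⟩
      rcases Int.prime_two.dvd_or_dvd h5 with h | h
      · exact h
      · have := dvd_sub h (Dvd.intro B rfl : (2:ℤ) ∣ 2 * B)
        rwa [show A + B - 2 * B = A - B by ring] at this
    obtain ⟨C, hC⟩ := hpar
    refine ⟨C, B, ?_⟩
    apply FaithfulSMul.algebraMap_injective (𝓞 K) K
    rw [huv, map_add, map_mul, hθK]
    simp only [map_intCast]
    have e1 : (u : K) = (A : K) / 2 := by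
      have : u = (A : ℚ) / 2 := by linarith
      rw [this]; push_cast; ring
    have e2 : (v : K) = (B : K) / 2 := by
      have : v = (B : ℚ) / 2 := by linarith
      rw [this]; push_cast; ring
    have e3 : (A : K) = 2 * C + B := by
      have : A = 2 * C + B := by linarith
      rw [this]; push_cast; ring
    rw [e1, e2, e3]; ring
  · intro a b h
    have h' := congrArg (algebraMap (𝓞 K) K) h
    simp only [map_add, map_mul, hθK, map_intCast, map_zero] at h'
    obtain ⟨h1, h2⟩ := hli (a + b / 2) (b / 2) (by push_cast; linear_combination h')
    have hb : (b : ℚ) = 0 := by linarith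
    have ha : (a : ℚ) = 0 := by rw [hb] at h1; simpa using h1
    exact ⟨by exact_mod_cast ha, by exact_mod_cast hb⟩

end Evil

set_option linter.all false
namespace Evil
open Finset NumberField InfinitePlace

section
variable {p m : ℕ} {K : Type} [Field K] [NumberField K] {θ : 𝓞 K} {σ : K ≃ₐ[ℚ] K}

lemma discr_eq (Q : Quad p m K θ σ) : discr K = p := by
  have hLI : LinearIndependent ℤ ![(1 : 𝓞 K), θ] := by
    rw [LinearIndependent.pair_iff]
    intro s t h
    exact Q.ind s t (by simpa using h)
  have hsp : ⊤ ≤ Submodule.span ℤ (Set.range ![(1 : 𝓞 K), θ]) := by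
    intro y _
    obtain ⟨a, b, rfl⟩ := Q.rep y
    simp only [Matrix.range_cons, Matrix.range_empty, Set.union_empty]
    rw [Set.singleton_union, Submodule.mem_span_pair]
    exact ⟨a, b, by simp⟩
  set B := Module.Basis.mk hLI hsp with hB
  have hB0 : B 0 = 1 := by simp [hB]
  have hB1 : B 1 = θ := by simp [hB]
  have hr : ∀ (a b : ℤ) (y : 𝓞 K), y = a + b * θ → B.repr y 0 = a ∧ B.repr y 1 = b := by
    intro a b y h
    have : y = a • B 0 + b • B 1 := by rw [hB0, hB1, h]; simp
    rw [this, map_add, map_smul, map_smul]; simp [-zsmul_eq_mul]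
  have htr : ∀ a b : ℤ, Algebra.trace ℤ (𝓞 K) (a + b * θ) = 2 * a + b := by
    intro a b
    rw [Algebra.trace_eq_matrix_trace B, Matrix.trace, Fin.sum_univ_two, Matrix.diag_apply, Matrix.diag_apply,
      Algebra.leftMulMatrix_eq_repr_mul, Algebra.leftMulMatrix_eq_repr_mul, hB0, hB1]
    rw [(hr a b _ (by ring)).1, (hr (b * m) (a + b) _ (by push_cast; linear_combination (b : 𝓞 K) * Q.sq)).2]
    ring
  rw [← discr_eq_discr K B, Algebra.discr_def, Matrix.det_fin_two]
  simp only [Algebra.traceMatrix_apply, Algebra.traceForm_apply, hB0, hB1]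
  have h1 := htr 1 0
  have h2 := htr 0 1
  have h3 := htr m 1
  rw [show ((m:ℤ) : 𝓞 K) + ((1:ℤ) : 𝓞 K) * θ = θ * θ by push_cast; linear_combination -Q.sq] at h3
  simp at h1 h2
  simp only [one_mul, mul_one]
  rw [h1, h2, h3]
  rw [Q.hp]; push_cast; ring

lemma places (hdeg : Module.finrank ℚ K = 2) (f : K →+* ℝ) :
    nrRealPlaces K = 2 ∧ nrComplexPlaces K = 0 := by
  have h := card_add_two_mul_card_eq_rank K
  have hr : ComplexEmbedding.IsReal (Complex.ofRealHom.comp f) := by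
    rw [ComplexEmbedding.isReal_iff]
    ext y; simp
  have : 0 < nrRealPlaces K := by
    classical
    refine Fintype.card_pos_iff.2 ?_
    exact ⟨⟨mk (Complex.ofRealHom.comp f), isReal_mk_iff.2 hr⟩⟩
  omega

lemma f_inj (f : K →+* ℝ) {u v : (𝓞 K)ˣ} (h : f (algebraMap (𝓞 K) K u) = f (algebraMap (𝓞 K) K v)) : u = v := by
  apply Units.ext
  exact FaithfulSMul.algebraMap_injective (𝓞 K) K (f.injective h)

lemma neg_one_tors : (-1 : (𝓞 K)ˣ) ∈ Units.torsion K := by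
  rw [Units.torsion, CommGroup.mem_torsion, isOfFinOrder_iff_pow_eq_one]
  exact ⟨2, by norm_num, by simp⟩

lemma tors (f : K →+* ℝ) : Units.torsionOrder K = 2 := by
  rw [Units.torsionOrder]
  have h : ((Units.torsion K : Subgroup (𝓞 K)ˣ) : Set (𝓞 K)ˣ) = {1, -1} := by
    ext u
    simp only [SetLike.mem_coe, Set.mem_insert_iff, Set.mem_singleton_iff]
    constructor
    · intro hu
      rw [Units.torsion, CommGroup.mem_torsion, isOfFinOrder_iff_pow_eq_one] at hu
      obtain ⟨n, hn, h⟩ := hu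
      have h1 : (f (algebraMap (𝓞 K) K u)) ^ n = 1 := by
        rw [← map_pow, ← map_pow, ← Units.val_pow_eq_pow_val, h]; simp
      have h2 : |f (algebraMap (𝓞 K) K u)| = 1 := by
        have : |f (algebraMap (𝓞 K) K u)| ^ n = 1 := by rw [← abs_pow, h1, abs_one]
        exact (pow_eq_one_iff_of_nonneg (abs_nonneg _) hn.ne').1 this
      rcases (abs_eq zero_le_one).1 h2 with h3 | h3
      · left; apply f_inj f; simpa using h3
      · right; apply f_inj f; simpa using h3
    · rintro (rfl | rfl)
      · exact one_mem _
      · exact neg_one_tors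
  have h2 : Nat.card (Units.torsion K) = Set.ncard ((Units.torsion K : Subgroup (𝓞 K)ˣ) : Set (𝓞 K)ˣ) := rfl
  rw [h2, h, Set.ncard_pair]
  intro h
  have := congrArg (fun u : (𝓞 K)ˣ => f (algebraMap (𝓞 K) K u)) h
  simp at this
  norm_num at this

lemma reg (hdeg : Module.finrank ℚ K = 2) (f : K →+* ℝ) (ε : (𝓞 K)ˣ)
    (hε1 : 1 < f (algebraMap (𝓞 K) K ε))
    (hεmin : ∀ u : (𝓞 K)ˣ, 1 < f (algebraMap (𝓞 K) K u) →
      f (algebraMap (𝓞 K) K ε) ≤ f (algebraMap (𝓞 K) K u)) :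
    Units.regulator K = Real.log (f (algebraMap (𝓞 K) K ε)) := by
  classical
  obtain ⟨hr1, hr2⟩ := places hdeg f
  have hcard : Fintype.card (InfinitePlace K) = 2 := by
    rw [card_eq_nrRealPlaces_add_nrComplexPlaces, hr1, hr2]
  have hrank : Units.rank K = 1 := by rw [Units.rank, hcard]
  set g : (𝓞 K)ˣ →* ℝ := (f.comp (algebraMap (𝓞 K) K)).toMonoidHom.comp (Units.coeHom (𝓞 K)) with hg
  have hg' : ∀ u : (𝓞 K)ˣ, g u = f (algebraMap (𝓞 K) K u) := fun u => rfl
  have ginj : Function.Injective g := fun u v h => f_inj f h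
  have hgz : ∀ (u : (𝓞 K)ˣ) (n : ℤ), g (u ^ n) = g u ^ n := by
    intro u n
    exact map_zpow' g (fun v => by
      have : g v * g v⁻¹ = 1 := by rw [← map_mul]; simp
      exact eq_inv_of_mul_eq_one_right this) u n
  have gne : ∀ u, g u ≠ 0 := fun u h => by
    have : g u * g u⁻¹ = 1 := by rw [← map_mul]; simp
    rw [h] at this; simp at this
  rw [← hg'] at hε1
  -- generation
  have hpos : ∀ u : (𝓞 K)ˣ, 0 < g u → ∃ n : ℤ, u = ε ^ n := by
    intro u hu
    obtain ⟨n, hn1, hn2⟩ := exists_mem_Ico_zpow hu hε1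
    refine ⟨n, ?_⟩
    have hzp : 0 < g ε ^ n := zpow_pos (by linarith) n
    have hz : g (u * (ε ^ n)⁻¹) = g u / g ε ^ n := by
      rw [← zpow_neg, map_mul, hgz, zpow_neg]; rfl
    by_contra hne
    have h1 : 1 < g (u * (ε ^ n)⁻¹) := by
      rw [hz, lt_div_iff₀ hzp, one_mul]
      refine lt_of_le_of_ne hn1 fun h => hne (ginj ?_)
      rw [hgz, h]
    have h2 : g ε ≤ g (u * (ε ^ n)⁻¹) := hεmin (u * (ε ^ n)⁻¹) h1
    rw [hz, le_div_iff₀ hzp] at h2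
    rw [zpow_add_one₀ (by linarith)] at hn2
    linarith
  set u : Fin (Units.rank K) → (𝓞 K)ˣ := fun _ => ε with hu
  have htop : Subgroup.closure (Set.range u) ⊔ Units.torsion K = ⊤ := by
    rw [eq_top_iff]
    intro v _
    have hεm : ∀ n : ℤ, ε ^ n ∈ Subgroup.closure (Set.range u) ⊔ Units.torsion K := by
      intro n
      refine zpow_mem (Subgroup.mem_sup_left (Subgroup.subset_closure (Set.mem_range.2 ⟨⟨0, by omega⟩, rfl⟩))) n
    rcases lt_or_gt_of_ne (gne v) with h | h
    · obtain ⟨n, hn⟩ := hpos (-v) (by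
        have : g (-v) = - g v := by simp [hg']
        rw [this]; linarith)
      have : v = -1 * ε ^ n := by rw [← hn]; simp
      rw [this]
      exact mul_mem (Subgroup.mem_sup_right neg_one_tors) (hεm n)
    · obtain ⟨n, rfl⟩ := hpos v h
      exact hεm n
  have hidx := Units.regOfFamily_div_regulator u
  rw [htop, Subgroup.index_top, Nat.cast_one, div_eq_one_iff_eq (Units.regulator_ne_zero K)] at hidx
  rw [← hidx]
  set w : InfinitePlace K := mk (Complex.ofRealHom.comp f) with hw
  obtain ⟨w', hw'⟩ : ∃ w' : InfinitePlace K, w' ≠ w := by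
    haveI : Nontrivial (InfinitePlace K) := Fintype.one_lt_card_iff_nontrivial.1 (by omega)
    exact exists_ne w
  have hc1 : Fintype.card {v : InfinitePlace K // v ≠ w'} = 1 := by
    rw [Fintype.card_subtype_compl, hcard]; simp
  have e : {v : InfinitePlace K // v ≠ w'} ≃ Fin (Units.rank K) :=
    Fintype.equivOfCardEq (by rw [hc1, Fintype.card_fin, hrank])
  rw [Units.regOfFamily_eq_det u w' e]
  haveI : Unique {v : InfinitePlace K // v ≠ w'} :=
    { default := ⟨w, hw'.symm⟩
      uniq := fun a => by
        haveI := Fintype.card_le_one_iff_subsingleton.1 hc1.le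
        exact Subsingleton.elim _ _ }
  rw [Matrix.det_unique]
  have hd : (default : {v : InfinitePlace K // v ≠ w'}) = ⟨w, hw'.symm⟩ := Subsingleton.elim _ _
  rw [hd]
  have hreal : w.IsReal := by
    rw [hw, isReal_mk_iff, ComplexEmbedding.isReal_iff]
    ext y; simp
  simp only [Matrix.of_apply]
  rw [mult_isReal ⟨w, hreal⟩]
  have hval : w (algebraMap (𝓞 K) K ε) = g ε := by
    rw [hw, apply]
    simp only [RingHom.comp_apply, Complex.ofRealHom_eq_coe, Complex.norm_real]
    rw [← hg', Real.norm_of_nonneg (by linarith)]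
  rw [hval, Nat.cast_one, one_mul, abs_of_nonneg (Real.log_nonneg hε1.le)]
  rfl

lemma residue (Q : Quad p m K θ σ) (f : K →+* ℝ) (ε : (𝓞 K)ˣ)
    (hε1 : 1 < f (algebraMap (𝓞 K) K ε))
    (hεmin : ∀ u : (𝓞 K)ˣ, 1 < f (algebraMap (𝓞 K) K u) →
      f (algebraMap (𝓞 K) K ε) ≤ f (algebraMap (𝓞 K) K u)) :
    dedekindZeta_residue K = 2 * classNumber K * Real.log (f (algebraMap (𝓞 K) K ε)) / Real.sqrt p := by
  obtain ⟨hr1, hr2⟩ := places Q.deg f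
  rw [dedekindZeta_residue_def, hr1, hr2, tors f, discr_eq Q, reg Q.deg f ε hε1 hεmin]
  have : |((p:ℤ) : ℝ)| = p := by simp
  push_cast
  simp only [Nat.abs_cast]
  have hs : Real.sqrt p ≠ 0 := by
    have := Q.pr.pos
    positivity
  field_simp
end
end Evil

set_option linter.all false
namespace Evil
open Finset NumberField

section
variable {p m : ℕ} {K : Type} [Field K] [NumberField K] {θ : 𝓞 K} {σ : K ≃ₐ[ℚ] K}

noncomputable def rK (K : Type) [Field K] [NumberField K] (n : ℕ) : ℕ :=
  Nat.card {I : Ideal (𝓞 K) // Ideal.absNorm I = n}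

lemma rK_one : rK K 1 = 1 := by
  rw [rK, Nat.card_eq_one_iff_unique]
  refine ⟨⟨fun a b => ?_⟩, ⟨⟨⊤, by simp⟩⟩⟩
  have ha := a.2
  have hb := b.2
  rw [Ideal.absNorm_eq_one_iff] at ha hb
  exact Subtype.ext (ha.trans hb.symm)

lemma norm_span_nat (hdeg : Module.finrank ℚ K = 2) (n : ℕ) :
    Ideal.absNorm (Ideal.span {(n : 𝓞 K)}) = n ^ 2 := by
  rw [Ideal.absNorm_span_natCast, RingOfIntegers.rank, hdeg]

lemma rK_mul (hdeg : Module.finrank ℚ K = 2) {a b : ℕ} (h : Nat.Coprime a b) :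
    rK K (a * b) = rK K a * rK K b := by
  rw [rK, rK, rK, ← Nat.card_prod]
  have hcop : Ideal.span {(a : 𝓞 K)} ⊔ Ideal.span {(b : 𝓞 K)} = ⊤ := by
    rw [Ideal.eq_top_iff_one]
    have := Nat.isCoprime_iff_coprime.2 h
    obtain ⟨u, v, huv⟩ := this
    have : (1 : 𝓞 K) = u * a + v * b := by exact_mod_cast congrArg (Int.cast : ℤ → 𝓞 K) huv.symm
    rw [this]
    exact Submodule.add_mem_sup (Ideal.mul_mem_left _ _ (Ideal.mem_span_singleton_self _))
      (Ideal.mul_mem_left _ _ (Ideal.mem_span_singleton_self _))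
  have hle : ∀ (I : Ideal (𝓞 K)) (n : ℕ), Ideal.absNorm I = n → Ideal.span {(n : 𝓞 K)} ≤ I := by
    rintro I n rfl
    rw [Ideal.span_singleton_le_iff_mem]
    exact Ideal.absNorm_mem I
  have key : ∀ (a b : ℕ) (_ : Ideal.span {(a : 𝓞 K)} ⊔ Ideal.span {(b : 𝓞 K)} = ⊤) (I J : Ideal (𝓞 K)),
      Ideal.absNorm I = a → Ideal.absNorm J = b → I * J ⊔ Ideal.span {(a : 𝓞 K)} = I := by
    intro a b hcop I J hI hJ
    apply le_antisymm
    · exact sup_le Ideal.mul_le_left (hle I a hI)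
    · calc I = I * (Ideal.span {(a : 𝓞 K)} ⊔ Ideal.span {(b : 𝓞 K)}) := by rw [hcop, Ideal.mul_top]
        _ ≤ I * (Ideal.span {(a : 𝓞 K)} ⊔ J) := Ideal.mul_mono_right (sup_le_sup_left (hle J b hJ) _)
        _ = I * Ideal.span {(a : 𝓞 K)} ⊔ I * J := Ideal.mul_sup _ _ _
        _ ≤ I * J ⊔ Ideal.span {(a : 𝓞 K)} := sup_le (le_trans Ideal.mul_le_right le_sup_right) le_sup_left
  refine (Nat.card_congr (Equiv.ofBijective
    (fun x : {I : Ideal (𝓞 K) // Ideal.absNorm I = a} × {I : Ideal (𝓞 K) // Ideal.absNorm I = b} =>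
      (⟨x.1.1 * x.2.1, by rw [map_mul, x.1.2, x.2.2]⟩ : {I : Ideal (𝓞 K) // Ideal.absNorm I = a * b}))
    ⟨?_, ?_⟩)).symm
  · rintro ⟨⟨I, hI⟩, ⟨J, hJ⟩⟩ ⟨⟨I', hI'⟩, ⟨J', hJ'⟩⟩ hh
    have hh' : I * J = I' * J' := congrArg Subtype.val hh
    have e1 : I = I' := by
      rw [← key a b hcop I J hI hJ, hh', key a b hcop I' J' hI' hJ']
    have e2 : J = J' := by
      rw [← key b a (by rw [sup_comm]; exact hcop) J I hJ hI, mul_comm J, hh', mul_comm I',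
        key b a (by rw [sup_comm]; exact hcop) J' I' hJ' hI']
    subst e1; subst e2; rfl
  · rintro ⟨I, hI⟩
    set A := I ⊔ Ideal.span {(a : 𝓞 K)} with hA
    set B := I ⊔ Ideal.span {(b : 𝓞 K)} with hB
    have hAB : A * B = I := by
      apply le_antisymm
      · rw [hA, Ideal.sup_mul, hB, Ideal.mul_sup, Ideal.mul_sup]
        refine sup_le (sup_le Ideal.mul_le_left Ideal.mul_le_left) (sup_le Ideal.mul_le_right ?_)
        rw [Ideal.span_singleton_mul_span_singleton]
        have := hle I _ hI
        exact_mod_cast this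
      · calc I = I * (Ideal.span {(a : 𝓞 K)} ⊔ Ideal.span {(b : 𝓞 K)}) := by rw [hcop, Ideal.mul_top]
          _ = I * Ideal.span {(a : 𝓞 K)} ⊔ I * Ideal.span {(b : 𝓞 K)} := Ideal.mul_sup _ _ _
          _ ≤ A * B := by
            refine sup_le ?_ (Ideal.mul_mono le_sup_left le_sup_right)
            rw [mul_comm]
            exact Ideal.mul_mono le_sup_right le_sup_left
    have hd : ∀ n : ℕ, Ideal.absNorm (I ⊔ Ideal.span {(n : 𝓞 K)}) ∣ n ^ 2 := by
      intro n
      rw [← norm_span_nat hdeg]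
      exact Ideal.absNorm_dvd_absNorm_of_le le_sup_right
    have hN : Ideal.absNorm A * Ideal.absNorm B = a * b := by rw [← map_mul, hAB, hI]
    have h1 : Ideal.absNorm A ∣ a := by
      have hc : Nat.Coprime (Ideal.absNorm A) b :=
        Nat.Coprime.coprime_dvd_left (hd a) (Nat.Coprime.pow_left 2 h)
      exact hc.dvd_of_dvd_mul_right ⟨_, hN.symm⟩
    have h2 : Ideal.absNorm B ∣ b := by
      have hc : Nat.Coprime (Ideal.absNorm B) a :=
        Nat.Coprime.coprime_dvd_left (hd b) (Nat.Coprime.pow_left 2 h.symm)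
      exact hc.dvd_of_dvd_mul_left ⟨_, by rw [← hN, mul_comm]⟩
    have h3 : Ideal.absNorm A = a ∧ Ideal.absNorm B = b := by
      obtain ⟨x, hx⟩ := h1
      obtain ⟨y, hy⟩ := h2
      by_cases hz : Ideal.absNorm A * Ideal.absNorm B = 0
      · rw [hz] at hN
        rcases Nat.mul_eq_zero.1 hN.symm with h0 | h0
        · subst h0
          have hb : b = 1 := by simpa using h
          subst hb
          refine ⟨?_, Nat.dvd_one.1 ⟨y, hy⟩⟩
          rw [Nat.dvd_one.1 ⟨y, hy⟩] at hz; simpa using hz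
        · subst h0
          have ha : a = 1 := by simpa using h
          subst ha
          refine ⟨Nat.dvd_one.1 ⟨x, hx⟩, ?_⟩
          rw [Nat.dvd_one.1 ⟨x, hx⟩] at hz; simpa using hz
      · have hxy : x * y = 1 := by
          have : Ideal.absNorm A * Ideal.absNorm B * (x * y) = Ideal.absNorm A * Ideal.absNorm B * 1 := by
            calc _ = (Ideal.absNorm A * x) * (Ideal.absNorm B * y) := by ring
              _ = _ := by rw [← hx, ← hy, mul_one, hN]
          exact Nat.eq_of_mul_eq_mul_left (Nat.pos_of_ne_zero hz) this
        have hx1 := Nat.eq_one_of_mul_eq_one_right hxy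
        have hy1 := Nat.eq_one_of_mul_eq_one_left hxy
        rw [hx1, mul_one] at hx
        rw [hy1, mul_one] at hy
        exact ⟨hx.symm, hy.symm⟩
    exact ⟨⟨⟨A, h3.1⟩, ⟨B, h3.2⟩⟩, Subtype.ext hAB⟩

end
end Evil

set_option linter.all false
namespace Evil
open Finset NumberField

section
variable {p m : ℕ} {K : Type} [Field K] [NumberField K] {θ : 𝓞 K} {σ : K ≃ₐ[ℚ] K}

lemma fac {q : ℕ} (hq : q.Prime) (A B : Ideal (𝓞 K)) (hA : A.IsPrime) (hB : B.IsPrime)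
    (hqA : (q : 𝓞 K) ∈ A) (hqB : (q : 𝓞 K) ∈ B) (hAB : A * B ≤ Ideal.span {(q : 𝓞 K)})
    (k : ℕ) (I : Ideal (𝓞 K)) (hI : Ideal.absNorm I = q ^ k) : ∃ i j, I = A ^ i * B ^ j := by
  have hq0 : (q : 𝓞 K) ≠ 0 := by exact_mod_cast hq.ne_zero
  have hA0 : A ≠ ⊥ := fun h => by rw [h] at hqA; exact hq0 (by simpa using hqA)
  have hB0 : B ≠ ⊥ := fun h => by rw [h] at hqB; exact hq0 (by simpa using hqB)
  have hAm := hA.isMaximal hA0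
  have hBm := hB.isMaximal hB0
  have hI0 : I ≠ 0 := by
    intro h
    rw [h] at hI
    simp at hI
    exact pow_ne_zero k hq.ne_zero hI.symm
  have hpr : ∀ P : Ideal (𝓞 K), Prime P → P ∣ I → P = A ∨ P = B := by
    intro P hP hPI
    have hPp : P.IsPrime := Ideal.isPrime_of_prime hP
    have h1 : (q : 𝓞 K) ^ k ∈ P := by
      apply Ideal.dvd_iff_le.1 hPI
      have := Ideal.absNorm_mem I
      rw [hI] at this
      exact_mod_cast this
    have h2 : (q : 𝓞 K) ∈ P := hPp.mem_of_pow_mem k h1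
    have h3 : A * B ≤ P := hAB.trans (by rwa [Ideal.span_singleton_le_iff_mem])
    rcases (Ideal.IsPrime.mul_le hPp).1 h3 with h | h
    · left; exact (hAm.eq_of_le hPp.ne_top h).symm
    · right; exact (hBm.eq_of_le hPp.ne_top h).symm
  clear hI
  induction I using UniqueFactorizationMonoid.induction_on_prime with
  | h₁ => exact absurd rfl hI0
  | h₂ x hx => exact ⟨0, 0, by rw [Ideal.isUnit_iff.1 hx]; simp [Ideal.one_eq_top]⟩
  | h₃ a P ha hP ih =>
    obtain ⟨i, j, hij⟩ := ih ha (fun R hR hRa => hpr R hR (hRa.mul_left P))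
    rcases hpr P hP (dvd_mul_right _ _) with rfl | rfl
    · exact ⟨i + 1, j, by rw [hij]; ring⟩
    · exact ⟨i, j + 1, by rw [hij]; ring⟩

lemma count_inert (hdeg : Module.finrank ℚ K = 2) {q : ℕ} (hq : q.Prime)
    (h : (Ideal.span {(q : 𝓞 K)}).IsPrime) (k : ℕ) :
    rK K (q ^ k) = if Even k then 1 else 0 := by
  have hf := fac hq _ _ h h (Ideal.mem_span_singleton_self _) (Ideal.mem_span_singleton_self _)
    Ideal.mul_le_left k
  have hn : ∀ i j : ℕ, Ideal.absNorm (Ideal.span {(q : 𝓞 K)} ^ i * Ideal.span {(q : 𝓞 K)} ^ j) =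
      q ^ (2 * (i + j)) := by
    intro i j
    rw [map_mul, map_pow, map_pow, norm_span_nat hdeg]; ring
  rw [rK]
  split_ifs with hk
  · obtain ⟨l, hl⟩ := hk
    rw [Nat.card_eq_one_iff_unique]
    refine ⟨⟨?_⟩, ⟨⟨Ideal.span {(q : 𝓞 K)} ^ l * Ideal.span {(q : 𝓞 K)} ^ 0, ?_⟩⟩⟩
    · rintro ⟨I, hI⟩ ⟨J, hJ⟩
      obtain ⟨i, j, rfl⟩ := hf I hI
      obtain ⟨i', j', rfl⟩ := hf J hJ
      rw [hn] at hI hJ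
      have h1 := Nat.pow_right_injective hq.two_le hI
      have h2 := Nat.pow_right_injective hq.two_le hJ
      apply Subtype.ext
      show _ * _ = _ * _
      rw [← pow_add, ← pow_add]
      congr 1; omega
    · rw [hn]; congr 1; omega
  · rw [Nat.card_eq_zero]
    left
    constructor
    rintro ⟨I, hI⟩
    obtain ⟨i, j, rfl⟩ := hf I hI
    rw [hn] at hI
    have h1 : 2 * (i + j) = k := Nat.pow_right_injective hq.two_le hI
    exact hk ⟨i + j, by omega⟩

lemma count_ram {q : ℕ} (hq : q.Prime) (A : Ideal (𝓞 K)) (hA : A.IsPrime)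
    (hAA : A * A = Ideal.span {(q : 𝓞 K)}) (hN : Ideal.absNorm A = q) (k : ℕ) :
    rK K (q ^ k) = 1 := by
  have hqA : (q : 𝓞 K) ∈ A := by
    have : (q : 𝓞 K) ∈ A * A := by rw [hAA]; exact Ideal.mem_span_singleton_self _
    exact Ideal.mul_le_left this
  have hf := fac hq A A hA hA hqA hqA hAA.le k
  rw [rK, Nat.card_eq_one_iff_unique]
  refine ⟨⟨?_⟩, ⟨⟨A ^ k, by rw [map_pow, hN]⟩⟩⟩
  have : ∀ I : Ideal (𝓞 K), Ideal.absNorm I = q ^ k → I = A ^ k := by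
    intro I hI
    obtain ⟨i, j, rfl⟩ := hf I hI
    rw [← pow_add] at hI ⊢
    rw [map_pow, hN] at hI
    rw [Nat.pow_right_injective hq.two_le hI]
  rintro ⟨I, hI⟩ ⟨J, hJ⟩
  exact Subtype.ext ((this I hI).trans (this J hJ).symm)

lemma count_split {q : ℕ} (hq : q.Prime) (A B : Ideal (𝓞 K)) (hA : A.IsPrime) (hB : B.IsPrime)
    (hAB : A * B = Ideal.span {(q : 𝓞 K)}) (hne : A ⊔ B = ⊤)
    (hNA : Ideal.absNorm A = q) (hNB : Ideal.absNorm B = q) (k : ℕ) :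
    rK K (q ^ k) = k + 1 := by
  have hq' : (q : 𝓞 K) ∈ A * B := by rw [hAB]; exact Ideal.mem_span_singleton_self _
  have hqA : (q : 𝓞 K) ∈ A := Ideal.mul_le_left hq'
  have hqB : (q : 𝓞 K) ∈ B := Ideal.mul_le_right hq'
  have hf := fac hq A B hA hB hqA hqB hAB.le k
  have hA0 : A ≠ ⊥ := by
    intro h; rw [h] at hNA; simp at hNA; exact hq.ne_zero hNA.symm
  have hB0 : B ≠ ⊥ := by
    intro h; rw [h] at hNB; simp at hNB; exact hq.ne_zero hNB.symm
  have hn : ∀ i j : ℕ, Ideal.absNorm (A ^ i * B ^ j) = q ^ (i + j) := by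
    intro i j
    rw [map_mul, map_pow, map_pow, hNA, hNB]; ring
  have hBA : ¬ B ≤ A := fun h => hA.ne_top (by rw [← hne]; exact (sup_eq_left.2 h).symm)
  -- powers determine exponent
  have hexp : ∀ i i' j j' : ℕ, A ^ i * B ^ j = A ^ i' * B ^ j' → i ≤ i' := by
    intro i i' j j' h
    by_contra hlt
    push Not at hlt
    obtain ⟨c, rfl⟩ := Nat.exists_eq_add_of_lt hlt
    rw [show i' + c + 1 = i' + (c + 1) by ring, pow_add, mul_assoc] at h
    have h2 := mul_left_cancel₀ (pow_ne_zero i' hA0) h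
    have h3 : B ^ j' ≤ A := by
      rw [← h2, pow_succ]
      exact Ideal.mul_le_left.trans Ideal.mul_le_right
    by_cases hj : j' = 0
    · rw [hj, pow_zero, Ideal.one_eq_top, top_le_iff] at h3
      exact hA.ne_top h3
    · exact hBA ((Ideal.IsPrime.pow_le_iff hj).1 h3)
  rw [rK]
  have e : Fin (k + 1) ≃ {I : Ideal (𝓞 K) // Ideal.absNorm I = q ^ k} := by
    refine Equiv.ofBijective (fun i => ⟨A ^ (i : ℕ) * B ^ (k - (i : ℕ)), ?_⟩) ⟨?_, ?_⟩
    · rw [hn]; congr 1; omega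
    · intro i i' h
      have h' := congrArg Subtype.val h
      simp only at h'
      exact Fin.ext (le_antisymm (hexp _ _ _ _ h') (hexp _ _ _ _ h'.symm))
    · rintro ⟨I, hI⟩
      obtain ⟨i, j, rfl⟩ := hf I hI
      rw [hn] at hI
      have h1 : i + j = k := Nat.pow_right_injective hq.two_le hI
      exact ⟨⟨i, by omega⟩, Subtype.ext (by simp only; congr 2; omega)⟩
  rw [← Nat.card_congr e]; simp

lemma not_mem (Q : Quad p m K θ σ) {q : ℕ} (hq : q.Prime) (s : ℤ) :
    θ - s ∉ Ideal.span {(q : 𝓞 K)} := by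
  intro h
  rw [Ideal.mem_span_singleton] at h
  obtain ⟨y, hy⟩ := h
  obtain ⟨a, b, rfl⟩ := Q.rep y
  obtain ⟨-, h2⟩ := Q.ind (s + q * a) (q * b - 1) (by push_cast; linear_combination -hy)
  have : (q : ℤ) ∣ 1 := ⟨b, by linarith⟩
  have h3 := Int.natCast_dvd_natCast.1 (by exact_mod_cast this : ((q : ℕ) : ℤ) ∣ ((1 : ℕ) : ℤ))
  exact hq.one_lt.ne' (Nat.dvd_one.1 h3)

lemma split_case (Q : Quad p m K θ σ) {q : ℕ} (hq : q.Prime) (hqp : q ≠ p) (t : ℤ)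
    (ht : (q : ℤ) ∣ t ^ 2 - t - m) (k : ℕ) : rK K (q ^ k) = k + 1 := by
  obtain ⟨r, hr⟩ := ht
  have hrK : (t : 𝓞 K) ^ 2 - t - m = q * r := by exact_mod_cast congrArg (Int.cast : ℤ → 𝓞 K) hr
  set A : Ideal (𝓞 K) := Ideal.span {(q : 𝓞 K), θ - t} with hA
  set B : Ideal (𝓞 K) := Ideal.span {(q : 𝓞 K), θ - ((1 - t : ℤ) : 𝓞 K)} with hB
  have hqA : (q : 𝓞 K) ∈ A := Ideal.subset_span (by simp)
  have hqB : (q : 𝓞 K) ∈ B := Ideal.subset_span (by simp)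
  have htA : θ - (t : 𝓞 K) ∈ A := Ideal.subset_span (by simp)
  have htB : θ - ((1 - t : ℤ) : 𝓞 K) ∈ B := Ideal.subset_span (by simp)
  have hne : A ⊔ B = ⊤ := by
    rw [Ideal.eq_top_iff_one]
    have hc : IsCoprime ((2 * t - 1) : ℤ) (q : ℤ) := by
      refine ((Nat.prime_iff_prime_int.1 hq).coprime_iff_not_dvd.2 fun h => ?_).symm
      have h2 : (q : ℤ) ∣ p := by
        have h3 : (p : ℤ) = (2 * t - 1) * (2 * t - 1) - q * (4 * r) := by
          rw [Q.hp]; push_cast; linear_combination -4 * hr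
        rw [h3]
        exact dvd_sub (h.mul_right _) (dvd_mul_right _ _)
      have h4 := Int.natCast_dvd_natCast.1 h2
      exact hqp ((Nat.prime_dvd_prime_iff_eq hq Q.pr).1 h4)
    obtain ⟨u, v, huv⟩ := hc
    have h1 : (1 : 𝓞 K) = u * (2 * t - 1) + v * q := by
      exact_mod_cast congrArg (Int.cast : ℤ → 𝓞 K) huv.symm
    have h2 : (2 * t - 1 : 𝓞 K) ∈ A ⊔ B := by
      have := sub_mem (Ideal.mem_sup_right (S := A) htB) (Ideal.mem_sup_left (T := B) htA)
      have e : (2 * t - 1 : 𝓞 K) = θ - ((1 - t : ℤ) : 𝓞 K) - (θ - t) := by push_cast; ring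
      rw [e]; exact this
    rw [h1]
    exact add_mem (Ideal.mul_mem_left _ _ h2) (Ideal.mul_mem_left _ _ (Ideal.mem_sup_left hqA))
  have hAB : A * B = Ideal.span {(q : 𝓞 K)} := by
    apply le_antisymm
    · rw [hA, hB, Ideal.span_pair_mul_span_pair, Ideal.span_le]
      have hqq := Ideal.mem_span_singleton_self (q : 𝓞 K)
      intro z hz
      simp only [Set.mem_insert_iff, Set.mem_singleton_iff] at hz
      rcases hz with rfl | rfl | rfl | rfl
      · exact Ideal.mul_mem_left _ _ hqq
      · exact Ideal.mul_mem_right _ _ hqq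
      · exact Ideal.mul_mem_left _ _ hqq
      · have e : (θ - (t : 𝓞 K)) * (θ - ((1 - t : ℤ) : 𝓞 K)) = (-r) * q := by
          push_cast; linear_combination Q.sq - hrK
        rw [e]; exact Ideal.mul_mem_left _ _ hqq
    · calc Ideal.span {(q : 𝓞 K)} = Ideal.span {(q : 𝓞 K)} * (A ⊔ B) := by rw [hne, Ideal.mul_top]
        _ = Ideal.span {(q : 𝓞 K)} * A ⊔ Ideal.span {(q : 𝓞 K)} * B := Ideal.mul_sup _ _ _
        _ ≤ A * B := by
          refine sup_le ?_ (Ideal.mul_mono_left (by rwa [Ideal.span_singleton_le_iff_mem]))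
          rw [mul_comm]
          exact Ideal.mul_mono_right (by rwa [Ideal.span_singleton_le_iff_mem])
  have hAt : A ≠ ⊤ := by
    intro h
    rw [h, Ideal.top_mul] at hAB
    rw [hAB] at htB
    exact not_mem Q hq _ htB
  have hBt : B ≠ ⊤ := by
    intro h
    rw [h, Ideal.mul_top] at hAB
    rw [hAB] at htA
    exact not_mem Q hq _ htA
  have hNN : Ideal.absNorm A * Ideal.absNorm B = q ^ 2 := by
    rw [← map_mul, hAB, norm_span_nat Q.deg]
  have hA1 : Ideal.absNorm A ≠ 1 := fun h => hAt (Ideal.absNorm_eq_one_iff.1 h)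
  have hB1 : Ideal.absNorm B ≠ 1 := fun h => hBt (Ideal.absNorm_eq_one_iff.1 h)
  have hN := (Nat.Prime.mul_eq_prime_sq_iff hq hA1 hB1).1 hNN
  exact count_split hq A B (Ideal.isPrime_of_irreducible_absNorm (by rw [hN.1]; exact hq))
    (Ideal.isPrime_of_irreducible_absNorm (by rw [hN.2]; exact hq)) hAB hne hN.1 hN.2 k

lemma ram_case (Q : Quad p m K θ σ) (k : ℕ) : rK K (p ^ k) = 1 := by
  have hAA : Ideal.span {2 * θ - 1} * Ideal.span {2 * θ - 1} = Ideal.span {(p : 𝓞 K)} := by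
    rw [Ideal.span_singleton_mul_span_singleton]
    congr 2
    rw [Q.hp]; push_cast; linear_combination 4 * Q.sq
  have hN : Ideal.absNorm (Ideal.span {2 * θ - 1}) = p := by
    have : Ideal.absNorm (Ideal.span {2 * θ - 1}) * Ideal.absNorm (Ideal.span {2 * θ - 1}) = p ^ 2 := by
      rw [← map_mul, hAA, norm_span_nat Q.deg]
    rw [← sq] at this
    exact Nat.pow_left_injective (n := 2) (by norm_num) this
  exact count_ram Q.pr _ (Ideal.isPrime_of_irreducible_absNorm (by rw [hN]; exact Q.pr)) hAA hN k

lemma inert_case (Q : Quad p m K θ σ) {q : ℕ} (hq : q.Prime)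
    (ht : ∀ t : ℤ, ¬ (q : ℤ) ∣ t ^ 2 - t - m) (k : ℕ) : rK K (q ^ k) = if Even k then 1 else 0 := by
  refine count_inert Q.deg hq ?_ k
  have hnt : Ideal.span {(q : 𝓞 K)} ≠ ⊤ := by
    intro h
    have := norm_span_nat Q.deg q
    rw [h, Ideal.absNorm_top] at this
    exact (Nat.one_lt_pow two_ne_zero hq.one_lt).ne this
  obtain ⟨P, hPm, hP⟩ := Ideal.exists_le_maximal _ hnt
  have hqP : (q : 𝓞 K) ∈ P := hP (Ideal.mem_span_singleton_self _)
  have hd : Ideal.absNorm P ∣ q ^ 2 := by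
    rw [← norm_span_nat Q.deg]; exact Ideal.absNorm_dvd_absNorm_of_le hP
  obtain ⟨i, hi, hPi⟩ := (Nat.dvd_prime_pow hq).1 hd
  have hP1 : Ideal.absNorm P ≠ 1 := fun h => hPm.ne_top (Ideal.absNorm_eq_one_iff.1 h)
  interval_cases i
  · simp at hPi; exact absurd hPi (by simpa using hP1)
  · exfalso
    rw [pow_one] at hPi
    haveI : Fact q.Prime := ⟨hq⟩
    letI : Field (𝓞 K ⧸ P) := Ideal.Quotient.field P
    haveI : CharP (𝓞 K ⧸ P) q := by
      have h0 : ((q : ℕ) : 𝓞 K ⧸ P) = 0 := by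
        have := Ideal.Quotient.eq_zero_iff_mem.2 hqP
        simpa using this
      exact (CharP.charP_iff_prime_eq_zero hq).2 h0
    have hcard : Nat.card (𝓞 K ⧸ P) = q := by rw [← hPi]; rfl
    haveI : Finite (𝓞 K ⧸ P) := Nat.finite_of_card_ne_zero (by rw [hcard]; exact hq.ne_zero)
    have hinj : Function.Injective (ZMod.castHom (dvd_refl q) (𝓞 K ⧸ P)) := RingHom.injective _
    have hbij : Function.Bijective (ZMod.castHom (dvd_refl q) (𝓞 K ⧸ P)) :=
      (Nat.bijective_iff_injective_and_card _).2 ⟨hinj, by rw [hcard]; simp⟩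
    obtain ⟨z, hz⟩ := hbij.2 (Ideal.Quotient.mk P θ)
    obtain ⟨t, rfl⟩ := ZMod.intCast_surjective z
    rw [map_intCast] at hz
    apply ht t
    rw [← ZMod.intCast_zmod_eq_zero_iff_dvd]
    apply hinj
    have := congrArg (Ideal.Quotient.mk P) Q.sq
    simp only [map_pow, map_add, map_natCast] at this
    rw [← hz] at this
    simp only [map_intCast, map_zero]
    push_cast
    rw [this]; ring
  · have : P = Ideal.span {(q : 𝓞 K)} := by
      obtain ⟨J, hJ⟩ := Ideal.dvd_iff_le.2 hP
      have h1 := congrArg Ideal.absNorm hJ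
      rw [map_mul, norm_span_nat Q.deg, hPi] at h1
      have h2 : Ideal.absNorm J = 1 := by
        have : q ^ 2 * 1 = q ^ 2 * Ideal.absNorm J := by rw [mul_one]; exact h1
        exact (Nat.eq_of_mul_eq_mul_left (pow_pos hq.pos 2) this).symm
      rw [Ideal.absNorm_eq_one_iff.1 h2, Ideal.mul_top] at hJ
      exact hJ.symm
    rw [← this]
    exact hPm.isPrime
end
end Evil

set_option linter.all false
namespace Evil
open Finset NumberField Filter Topology

section
variable {p m : ℕ} [Fact p.Prime] {K : Type} [Field K] [NumberField K] {θ : 𝓞 K} {σ : K ≃ₐ[ℚ] K}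

lemma root_iff (hp : p = 4 * m + 1) {q : ℕ} (hq : q.Prime) (hqp : q ≠ p) :
    IsSquare ((q : ℕ) : ZMod p) ↔ ∃ t : ℤ, (q : ℤ) ∣ t ^ 2 - t - m := by
  haveI : Fact q.Prime := ⟨hq⟩
  by_cases h2 : q = 2
  · subst h2
    have : IsSquare ((2 : ℕ) : ZMod p) ↔ p % 8 = 1 ∨ p % 8 = 7 := by
      exact_mod_cast ZMod.exists_sq_eq_two_iff (p := p) (Ne.symm hqp)
    rw [this]
    constructor
    · intro h
      refine ⟨0, ?_⟩
      have : m % 2 = 0 := by omega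
      push_cast
      omega
    · rintro ⟨t, ht⟩
      have h1 : (2 : ℤ) ∣ t ^ 2 - t := by
        have := Int.even_mul_pred_self t
        rw [show t ^ 2 - t = t * (t - 1) by ring]
        exact this.two_dvd
      push_cast at ht
      omega
  · rw [ZMod.exists_sq_eq_prime_iff_of_mod_four_eq_one (by omega) h2]
    have h20 : (2 : ZMod q) ≠ 0 := by
      intro h
      have h' : ((2 : ℕ) : ZMod q) = 0 := by exact_mod_cast h
      rw [ZMod.natCast_eq_zero_iff] at h'
      exact h2 ((Nat.prime_dvd_prime_iff_eq hq Nat.prime_two).1 h')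
    have hpq : (p : ZMod q) = 4 * m + 1 := by rw [hp]; push_cast; ring
    constructor
    · rintro ⟨y, hy⟩
      obtain ⟨t, ht⟩ := ZMod.intCast_surjective ((y + 1) / 2)
      refine ⟨t, ?_⟩
      rw [← ZMod.intCast_zmod_eq_zero_iff_dvd]
      push_cast
      have h3 : (t : ZMod q) * 2 = y + 1 := by rw [ht]; field_simp
      have h4 : (2 : ZMod q) * 2 * ((t : ZMod q) ^ 2 - t - m) = 0 := by
        linear_combination (t * 2 + (y + 1) - 2) * h3 - hy + hpq
      rcases mul_eq_zero.1 h4 with h | h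
      · exact absurd h (mul_ne_zero h20 h20)
      · exact h
    · rintro ⟨t, ht⟩
      rw [← ZMod.intCast_zmod_eq_zero_iff_dvd] at ht
      push_cast at ht
      exact ⟨2 * t - 1, by rw [hpq]; linear_combination -4 * ht⟩

lemma chi_mul (a b : ℕ) : chi p (a * b) = chi p a * chi p b := by
  rw [chi, chi, chi, Nat.cast_mul, map_mul, Int.cast_mul]

lemma chi_one : chi p 1 = 1 := by simp [chi]

lemma chi_pow (q k : ℕ) : chi p (q ^ k) = chi p q ^ k := by
  rw [chi, chi, Nat.cast_pow, map_pow, Int.cast_pow]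

noncomputable def chiA (p : ℕ) [Fact p.Prime] : ArithmeticFunction ℂ := ⟨chi p, by simp [chi]⟩

noncomputable def rA (K : Type) [Field K] [NumberField K] : ArithmeticFunction ℂ :=
  ⟨fun n => if n = 0 then 0 else (rK K n : ℂ), by simp⟩

lemma chiA_mult : (chiA p).IsMultiplicative :=
  ⟨chi_one, fun _ => chi_mul _ _⟩

lemma rA_mult (hdeg : Module.finrank ℚ K = 2) : (rA K).IsMultiplicative := by
  refine ⟨?_, ?_⟩
  · show (if (1:ℕ) = 0 then (0:ℂ) else (rK K 1 : ℂ)) = 1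
    simp [rK_one]
  · intro a b hab
    show (if a * b = 0 then (0:ℂ) else (rK K (a * b) : ℂ)) =
      (if a = 0 then (0:ℂ) else (rK K a : ℂ)) * (if b = 0 then (0:ℂ) else (rK K b : ℂ))
    by_cases ha : a = 0
    · simp [ha]
    by_cases hb : b = 0
    · simp [hb]
    simp [ha, hb, rK_mul hdeg hab]

lemma conv (Q : Quad p m K θ σ) : rA K = (ArithmeticFunction.zeta : ArithmeticFunction ℂ) * chiA p := by
  rw [ArithmeticFunction.IsMultiplicative.eq_iff_eq_on_prime_powers _ (rA_mult Q.deg) _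
    (ArithmeticFunction.isMultiplicative_zeta.natCast.mul chiA_mult)]
  intro q k hq
  rw [ArithmeticFunction.coe_zeta_mul_apply, Nat.sum_divisors_prime_pow hq]
  have e1 : rA K (q ^ k) = (rK K (q ^ k) : ℂ) := by
    show (if q ^ k = 0 then (0:ℂ) else (rK K (q ^ k) : ℂ)) = _
    rw [if_neg (pow_ne_zero k hq.ne_zero)]
  have e2 : ∀ i, chiA p (q ^ i) = chi p q ^ i := fun i => chi_pow q i
  rw [e1]
  simp only [e2]
  by_cases hqp : q = p
  · subst hqp
    rw [ram_case Q]
    have : chi q q = 0 := by simp [chi]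
    rw [this, Finset.sum_range_succ']
    simp
  · have hq0 : ((q : ℕ) : ZMod p) ≠ 0 := by
      rw [Ne, ZMod.natCast_eq_zero_iff]
      intro h
      exact hqp ((Nat.prime_dvd_prime_iff_eq Q.pr hq).1 h).symm
    by_cases h : IsSquare ((q : ℕ) : ZMod p)
    · have h1 : chi p q = 1 := by
        rw [chi, (quadraticChar_one_iff_isSquare hq0).2 h]; simp
      obtain ⟨t, ht⟩ := (root_iff Q.hp hq hqp).1 h
      rw [split_case Q hq hqp t ht, h1]
      simp
    · have h1 : chi p q = -1 := by
        rw [chi, quadraticChar_neg_one_iff_not_isSquare.2 h]; simp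
      have h2 : ∀ t : ℤ, ¬ (q : ℤ) ∣ t ^ 2 - t - m := fun t ht =>
        h ((root_iff Q.hp hq hqp).2 ⟨t, ht⟩)
      rw [inert_case Q hq h2, h1, neg_one_geom_sum]
      simp only [Nat.even_add_one]
      by_cases hk : Even k <;> simp [hk]

lemma zeta_eq (Q : Quad p m K θ σ) {s : ℝ} (hs : 1 < s) :
    dedekindZeta K s = riemannZeta s * LSeries (chi p) s := by
  have hs' : 1 < (s : ℂ).re := by simpa using hs
  have h1 : dedekindZeta K s = LSeries (fun n => rA K n) s := by
    apply LSeries_congr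
    intro n hn
    show _ = (if n = 0 then (0:ℂ) else (rK K n : ℂ))
    rw [if_neg hn]; rfl
  rw [h1, conv Q, ArithmeticFunction.LSeries_mul']
  · congr 1
    rw [← ArithmeticFunction.LSeries_zeta_eq_riemannZeta hs']
    rfl
  · exact ArithmeticFunction.LSeriesSummable_zeta_iff.2 hs'
  · exact LSeriesSummable_of_bounded_of_one_lt_re (m := 1) (fun n _ => chi_norm n) hs'

lemma residue_eq (Q : Quad p m K θ σ) {L : ℝ}
    (h : Tendsto (fun s : ℝ => LSeries (chi p) s) (𝓝[>] 1) (𝓝 (L : ℂ))) :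
    dedekindZeta_residue K = L := by
  have h1 := tendsto_sub_one_mul_dedekindZeta_nhdsGT K
  have h2 : Tendsto (fun s : ℝ => ((s : ℂ) - 1) * riemannZeta s) (𝓝[>] 1) (𝓝 1) := by
    refine riemannZeta_residue_one.comp ?_
    rw [tendsto_nhdsWithin_iff]
    constructor
    · have : Tendsto (fun s : ℝ => (s : ℂ)) (𝓝 1) (𝓝 ((1 : ℝ) : ℂ)) :=
        Complex.continuous_ofReal.tendsto 1
      rw [Complex.ofReal_one] at this
      exact this.mono_left nhdsWithin_le_nhds
    · filter_upwards [self_mem_nhdsWithin] with s hs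
      have : s ≠ 1 := ne_of_gt hs
      simpa using this
  have h3 := h2.mul h
  have h4 : Tendsto (fun s : ℝ => ((s : ℂ) - 1) * dedekindZeta K s) (𝓝[>] 1) (𝓝 (1 * (L : ℂ))) := by
    refine h3.congr' ?_
    filter_upwards [self_mem_nhdsWithin] with s hs
    rw [zeta_eq Q hs, mul_assoc]
  have := tendsto_nhds_unique h1 h4
  rw [one_mul] at this
  exact_mod_cast this

end
end Evil

set_option linter.all false
namespace Evil
open Finset NumberField Filter Topology

section
variable {p m : ℕ} {K : Type} [Field K] [NumberField K] {θ : 𝓞 K} {σ : K ≃ₐ[ℚ] K}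

lemma unit_norm (Q : Quad p m K θ σ) (u : (𝓞 K)ˣ) : ∃ A B : ℤ, (u : 𝓞 K) = A + B * θ ∧
    (A ^ 2 + A * B - m * B ^ 2 = 1 ∨ A ^ 2 + A * B - m * B ^ 2 = -1) := by
  obtain ⟨A, B, h1⟩ := Q.rep u
  obtain ⟨C, D, h2⟩ := Q.rep ((u⁻¹ : (𝓞 K)ˣ) : 𝓞 K)
  have h3 : (u : 𝓞 K) * ((u⁻¹ : (𝓞 K)ˣ) : 𝓞 K) = 1 := Units.mul_inv u
  rw [h1, h2] at h3
  obtain ⟨h4, h5⟩ := Q.ind (A * C + m * B * D - 1) (A * D + B * C + B * D)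
    (by push_cast; linear_combination h3 - (B * D) * Q.sq)
  refine ⟨A, B, h1, ?_⟩
  apply Int.eq_one_or_neg_one_of_mul_eq_one (v := C ^ 2 + C * D - m * D ^ 2)
  have e : A * C + m * B * D = 1 := by linarith
  calc (A ^ 2 + A * B - m * B ^ 2) * (C ^ 2 + C * D - m * D ^ 2)
      = (A * C + m * B * D) ^ 2 + (A * C + m * B * D) * (A * D + B * C + B * D)
        - m * (A * D + B * C + B * D) ^ 2 := by ring
    _ = 1 := by rw [e, h5]; ring

lemma irr (hp : p.Prime) (A B : ℤ) (h : (A : ℝ) + B * √p = 0) : A = 0 ∧ B = 0 := by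
  by_cases hB : B = 0
  · subst hB
    simp at h
    exact ⟨h, rfl⟩
  · exfalso
    apply hp.irrational_sqrt
    refine ⟨-A / B, ?_⟩
    have : (B : ℝ) ≠ 0 := by exact_mod_cast hB
    push_cast
    field_simp
    linarith

lemma norm_ab (Q : Quad p m K θ σ) (f : K →+* ℝ) (u : (𝓞 K)ˣ) (a b : ℝ)
    (ha : ∃ A : ℤ, 2 * a = (A : ℝ)) (hb : ∃ B : ℤ, 2 * b = (B : ℝ))
    (h : a + b * √p = f (algebraMap (𝓞 K) K u)) : a ^ 2 - p * b ^ 2 = 1 ∨ a ^ 2 - p * b ^ 2 = -1 := by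
  obtain ⟨A, B, hu, hN⟩ := unit_norm Q u
  obtain ⟨a', ha⟩ := ha
  obtain ⟨b', hb⟩ := hb
  set t : ℝ := f (algebraMap (𝓞 K) K θ) with ht
  have hsq : t ^ 2 = t + m := by
    have := congrArg (fun z => f (algebraMap (𝓞 K) K z)) Q.sq
    simpa using this
  have hfu : a + b * √p = A + B * t := by
    rw [h, hu]; simp [ht]
  have hpm : (p : ℝ) = 4 * m + 1 := by rw [Q.hp]; push_cast; ring
  have hs : √(p : ℝ) ^ 2 = p := Real.sq_sqrt (Nat.cast_nonneg p)
  have h2 : (2 * t - 1 - √p) * (2 * t - 1 + √p) = 0 := by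
    linear_combination 4 * hsq - hs - hpm
  have hN' : ((A : ℝ) ^ 2 + A * B - m * B ^ 2 = 1 ∨ (A : ℝ) ^ 2 + A * B - m * B ^ 2 = -1) := by
    rcases hN with hN | hN
    · left; exact_mod_cast hN
    · right; exact_mod_cast hN
  have key : a ^ 2 - p * b ^ 2 = (A : ℝ) ^ 2 + A * B - m * B ^ 2 := by
    rcases mul_eq_zero.1 h2 with h2 | h2
    · obtain ⟨e1, e2⟩ := irr Q.pr (a' - 2 * A - B) (b' - B) (by
        push_cast; rw [← ha, ← hb]; linear_combination 2 * hfu + B * h2)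
      have e1' : 2 * a = 2 * A + B := by rw [ha]; exact_mod_cast (by linarith : a' = 2 * A + B)
      have e2' : 2 * b = B := by rw [hb]; exact_mod_cast (by linarith : b' = B)
      rw [show a = A + B / 2 by linarith, show b = (B : ℝ) / 2 by linarith, hpm]
      ring
    · obtain ⟨e1, e2⟩ := irr Q.pr (a' - 2 * A - B) (b' + B) (by
        push_cast; rw [← ha, ← hb]; linear_combination 2 * hfu + B * h2)
      have e1' : 2 * a = 2 * A + B := by rw [ha]; exact_mod_cast (by linarith : a' = 2 * A + B)
      have e2' : 2 * b = -B := by rw [hb]; exact_mod_cast (by linarith : b' = -B)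
      rw [show a = A + B / 2 by linarith, show b = -(B : ℝ) / 2 by linarith, hpm]
      ring
  rw [key]; exact hN'

lemma fin_step (hp : p.Prime) (D : ℤ) (X a b : ℝ) (hX : 1 < X) (hb : ∃ B : ℤ, 2 * b = (B : ℝ))
    (hab : a + b * √p = X) (hN : a ^ 2 - p * b ^ 2 = 1 ∨ a ^ 2 - p * b ^ 2 = -1)
    (hD : 2 * (D : ℝ) = X⁻¹ - X) : (D : ℝ) = -a := by
  have hs : √(p : ℝ) ^ 2 = p := Real.sq_sqrt (Nat.cast_nonneg p)
  have hX0 : X ≠ 0 := by linarith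
  rcases hN with hN | hN
  · exfalso
    have hi : X⁻¹ = a - b * √p := by
      rw [inv_eq_iff_eq_inv, eq_comm]
      apply inv_eq_of_mul_eq_one_left
      rw [← hab]; linear_combination hN - b ^ 2 * hs
    obtain ⟨B, hB⟩ := hb
    obtain ⟨e1, e2⟩ := irr hp (2 * D) B (by
      push_cast; rw [← hB]; rw [hi, ← hab] at hD; linear_combination hD)
    have hD0 : (D : ℝ) = 0 := by exact_mod_cast (by linarith : D = 0)
    rw [hD0] at hD
    have : X⁻¹ < 1 := inv_lt_one_of_one_lt₀ hX
    linarith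
  · have hi : X⁻¹ = -(a - b * √p) := by
      rw [inv_eq_iff_eq_inv, eq_comm]
      apply inv_eq_of_mul_eq_one_left
      rw [← hab]; linear_combination -hN + b ^ 2 * hs
    rw [hi, ← hab] at hD
    linarith

lemma FH_val {p h : ℕ} {F H e : ℝ} (hp : 0 < p) (hF : 0 < F) (hH : 0 < H) (he : 1 < e) (hFH : F * H = p)
    (hl : Real.log H - Real.log F = 2 * h * Real.log e) :
    F = √p * (e ^ h)⁻¹ ∧ H = √p * e ^ h := by
  have he0 : 0 < e := by linarith
  have hE : 0 < e ^ h := pow_pos he0 h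
  have h1 : H = F * (e ^ h) ^ 2 := by
    apply Real.log_injOn_pos (Set.mem_Ioi.2 hH) (Set.mem_Ioi.2 (by positivity))
    rw [Real.log_mul hF.ne' (by positivity), Real.log_pow, Real.log_pow]
    push_cast; linarith
  have h2 : F * e ^ h = √p := by
    rw [eq_comm, Real.sqrt_eq_iff_mul_self_eq (Nat.cast_nonneg p) (by positivity), ← hFH, h1]
    ring
  constructor
  · rw [← h2]; field_simp
  · rw [h1, ← h2]; ring
end
end Evil

open Evil in
theorem chapman_evil_determinant (p : ℕ) [Fact (Nat.Prime p)] (hp : p % 4 = 1)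
    (K : Type) [Field K] [NumberField K]
    (hdeg : Module.finrank ℚ K = 2)
    (hsq : ∃ x : K, x ^ 2 = (p : K))
    (f : K →+* ℝ)
    (ε : (NumberField.RingOfIntegers K)ˣ)
    (hε1 : 1 < f (algebraMap (NumberField.RingOfIntegers K) K (ε : NumberField.RingOfIntegers K)))
    (hεmin : ∀ u : (NumberField.RingOfIntegers K)ˣ,
      1 < f (algebraMap (NumberField.RingOfIntegers K) K (u : NumberField.RingOfIntegers K)) →
      f (algebraMap (NumberField.RingOfIntegers K) K (ε : NumberField.RingOfIntegers K)) ≤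
        f (algebraMap (NumberField.RingOfIntegers K) K (u : NumberField.RingOfIntegers K)))
    (a b : ℝ)
    (ha : ∃ A : ℤ, 2 * a = (A : ℝ)) (hb : ∃ B : ℤ, 2 * b = (B : ℝ))
    (hab : a + b * Real.sqrt p =
      f (algebraMap (NumberField.RingOfIntegers K) K (ε : NumberField.RingOfIntegers K)) ^
        (if p % 8 = 1 then NumberField.classNumber K else 3 * NumberField.classNumber K)) :
    (((Matrix.of fun i j : Fin ((p - 1) / 2 + 1) =>
        legendreSym p ((j : ℤ) - (i : ℤ))).det : ℤ) : ℝ) = -a := by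
  have hpr : p.Prime := Fact.out
  obtain ⟨x, hx⟩ := hsq
  obtain ⟨θ, σ, Q, -⟩ := exists_quad p hpr hp K hdeg x hx
  obtain ⟨m, c, d, E, ψ, F, H, hψ, hG, hF, hH, hcF, hdH, hFH, hL⟩ := Lone hp
  have hr := residue Q f ε hε1 hεmin
  rw [residue_eq Q hL] at hr
  have hs0 : (√(p : ℝ)) ≠ 0 := (Real.sqrt_pos.2 (by exact_mod_cast hpr.pos)).ne'
  have hl : Real.log H - Real.log F =
      2 * (NumberField.classNumber K : ℕ) * Real.log (f (algebraMap _ K (ε : NumberField.RingOfIntegers K))) := by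
    field_simp at hr
    linarith
  obtain ⟨hFv, hHv⟩ := FH_val hpr.pos hF hH hε1 hFH hl
  set e : ℝ := f (algebraMap _ K (ε : NumberField.RingOfIntegers K)) with he
  set h : ℕ := NumberField.classNumber K with hh
  set M : ℕ := if p % 8 = 1 then h else 3 * h with hM
  have hhpos : 0 < h := NumberField.classNumber_pos K
  have hMpos : M ≠ 0 := by rw [hM]; split_ifs <;> omega
  have hX : 1 < e ^ M := one_lt_pow₀ hε1 hMpos
  have he0 : e ≠ 0 := by linarith
  have hN := norm_ab Q f (ε ^ M) a b ha hb (by rw [hab]; simp [he])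
  set D : ℤ := (Matrix.of fun i j : Fin ((p - 1) / 2 + 1) =>
        legendreSym p ((j : ℤ) - (i : ℤ))).det with hD
  have hdim : (p - 1) / 2 + 1 = 2 * m + 1 := by have := E.hp; omega
  have hdet : (Matrix.of fun i j : Fin (2 * m + 1) =>
      ((quadraticChar (ZMod p) ((j : ℕ) - (i : ℕ) : ZMod p) : ℤ) : ℂ)).det = (D : ℂ) := by
    rw [hD]
    rw [hdim]
    rw [Int.cast_det]
    congr 1
    ext i j
    simp [legendreSym]
  have hC := det_C E hψ
  rw [hdet, hG, hcF, hdH] at hC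
  have hC' : 2 * √(p : ℝ) * (D : ℝ) = if p % 8 = 1 then F - H else F ^ 2 / H - H ^ 2 / F := by
    split_ifs at hC ⊢ with h8
    · exact_mod_cast hC
    · exact_mod_cast hC
  refine fin_step hpr D (e ^ M) a b hX hb hab hN ?_
  apply mul_left_cancel₀ hs0
  rw [show √(p : ℝ) * (2 * (D : ℝ)) = 2 * √(p : ℝ) * (D : ℝ) by ring, hC', hM]
  split_ifs with h8
  · rw [hFv, hHv]; ring
  · rw [hFv, hHv, pow_mul']
    field_simp
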